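/- Let q be a prime power and let x_1,…,x_n be positive reals with x_1+⋯+x_n = 1. Then the q-Tsetlin library operator T_{G/B}(q,x) on ℂ[G/B] has a unique stationary distribution Ψ(q,x); Ψ(q,x)_F = Ψ(q,x)_{F'} whenever the cosets F and F' lie in the same double coset [π]; for π ∈ S_n and F_π the coset of the permutation matrix of π, Ψ(q,x)_{F_π} = ∏_{k=1}^n f(π_1,…,π_k) / (1 − ∑_{s∈{π_1,…,π_{k−1}}} x_s/q^{n−s−b_k(s)}), where f(π_1,…,π_k) = ∑_{s∈{π_1,…,π_k}, s≤π_k} (x_s/q^{n−s−b_k(s)})·(q−1)^{χ(s<π_k)}, b_k(s) = #{t ∈ {π_1,…,π_{k−1}} : t > s}, and χ(s<π_k) = 1 if s < π_k and 0 otherwise; and ∑_{F ∈ G/B} Ψ(q,x)_F = 1. -/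

import Mathlib

open scoped Classical
set_option linter.unusedSectionVars false
set_option synthInstance.maxHeartbeats 1000000
set_option maxHeartbeats 1000000

noncomputable section

namespace QTsetlin

/-- `M` is upper triangular. -/
def upperTri {F : Type} [Field F] {n : ℕ} (M : Matrix (Fin n) (Fin n) F) : Prop :=
  ∀ i j : Fin n, j < i → M i j = 0

/-- `M` is lower triangular. -/
def lowerTri {F : Type} [Field F] {n : ℕ} (M : Matrix (Fin n) (Fin n) F) : Prop :=
  ∀ i j : Fin n, i < j → M i j = 0

variable (F : Type) [Field F] [Fintype F] [DecidableEq F] (n : ℕ)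

/-- The general linear group `G = GL_n(F_q)`. -/
abbrev GLn := GL (Fin n) F

/-- The Borel subgroup `B` of invertible upper triangular matrices. -/
def Bsub : Subgroup (GLn F n) where
  carrier := {g | upperTri (g : Matrix (Fin n) (Fin n) F)}
  one_mem' := by
    intro i j hij
    simp [Matrix.one_apply, (Fin.ne_of_lt hij).symm]
  mul_mem' := by
    intro a b ha hb i j hij
    exact Matrix.BlockTriangular.mul ha hb hij
  inv_mem' := by
    intro a ha
    have hdet : IsUnit ((a : Matrix (Fin n) (Fin n) F).det) :=
      (Matrix.isUnit_iff_isUnit_det _).mp a.isUnit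
    have hinv : Invertible (a : Matrix (Fin n) (Fin n) F) :=
      Matrix.invertibleOfIsUnitDet _ hdet
    have h2 : ((a : Matrix (Fin n) (Fin n) F)⁻¹).BlockTriangular (id : Fin n → Fin n) :=
      Matrix.blockTriangular_inv_of_blockTriangular ha
    show upperTri ((a⁻¹ : GLn F n) : Matrix (Fin n) (Fin n) F)
    rw [show ((a⁻¹ : GLn F n) : Matrix (Fin n) (Fin n) F)
        = (a : Matrix (Fin n) (Fin n) F)⁻¹ from Matrix.coe_units_inv a]
    exact h2

/-- The set of cosets `G/B`. -/
abbrev Cosets := GLn F n ⧸ Bsub F n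

/-- permutation matrix of `π`: entry 1 in positions `(π j, j)`. -/
def permMat (π : Equiv.Perm (Fin n)) : Matrix (Fin n) (Fin n) F :=
  fun i j => if π j = i then 1 else 0

lemma permMat_mul (π σ : Equiv.Perm (Fin n)) :
    permMat F n π * permMat F n σ = permMat F n (π * σ) := by
  ext i j
  rw [Matrix.mul_apply]
  simp only [permMat, mul_ite, ite_mul, one_mul, mul_one, mul_zero, zero_mul]
  rw [Finset.sum_eq_single (σ j)]
  · simp [Equiv.Perm.mul_apply]
    congr
  · intro k _ hk
    simp [hk.symm]
  · simp

lemma permMat_one : permMat F n 1 = 1 := by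
  ext i j
  simp [permMat, Matrix.one_apply, eq_comm]

/-- The permutation matrix of `π`, as an element of `GL_n(F)`. -/
def permGL (π : Equiv.Perm (Fin n)) : GLn F n :=
  ⟨permMat F n π, permMat F n π⁻¹,
    by rw [permMat_mul, mul_inv_cancel, permMat_one],
    by rw [permMat_mul, inv_mul_cancel, permMat_one]⟩

/-- `f_i(t)`: identity matrix with an extra entry `t` in position `(r, c)`, as an
element of `GL_n(F)`. -/
def transvGL (r c : Fin n) (h : r ≠ c) (t : F) : GLn F n :=
  ⟨Matrix.transvection r c t, Matrix.transvection r c (-t),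
    by rw [Matrix.transvection_mul_transvection_same _ _ h, add_neg_cancel,
      Matrix.transvection_zero],
    by rw [Matrix.transvection_mul_transvection_same _ _ h, neg_add_cancel,
      Matrix.transvection_zero]⟩

variable (K : Type) [Field K]

/-- Matrix (row convention: row `gB` is `(gB) · T_{k+1}`) of the Hecke generator `T_{k+1}`
(paper indexing) on `ℂ[G/B]`:
`(gB)·T_i = g s_i B + ∑_{t ≠ 0} g f_i(t) B`, where `s_i` swaps (0-based) positions `k, k+1`
and `f_i(t)` has an extra entry `t` in (0-based) position `(k+1, k)`. -/
def genGB (k : ℕ) : Matrix (Cosets F n) (Cosets F n) K := fun C D =>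
  if h : k + 1 < n then
    (if (QuotientGroup.mk (C.out * permGL F n
          (Equiv.swap ⟨k, Nat.lt_of_succ_lt h⟩ ⟨k + 1, h⟩)) : Cosets F n) = D then 1 else 0)
    + ((Finset.univ.filter fun t : F => t ≠ 0 ∧
        (QuotientGroup.mk (C.out * transvGL F n ⟨k + 1, h⟩ ⟨k, Nat.lt_of_succ_lt h⟩
          (fun hc => by simp [Fin.ext_iff] at hc) t) : Cosets F n) = D).card : K)
  else 0

/-- Matrix of the product `T_k T_{k-1} ⋯ T_1` (paper indexing) on `ℂ[G/B]`. -/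
def prodGenGB : ℕ → Matrix (Cosets F n) (Cosets F n) K
  | 0 => 1
  | k + 1 => genGB F n K k * prodGenGB k

/-- The (0-based) row index of the leading entry (the pivot `1` of the distinguished coset
representative) in the first column of a representative of the coset `C`. -/
def pivotRow (C : Cosets F n) : ℕ :=
  sInf {i : ℕ | ∃ h : i < n,
    ((C.out : GLn F n) : Matrix (Fin n) (Fin n) F) ⟨i, h⟩
      ⟨0, Nat.lt_of_le_of_lt (Nat.zero_le i) h⟩ ≠ 0}

/-- Matrix of the weighting operator `X_{G/B}(q,x)`, where `q` is the cardinality of the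
field: `gB ↦ (x_i / q^{n-i}) gB` with `i` the row index of the leading 1 in the first
column of the distinguished representative of `gB`. -/
def XGB (x : Fin n → K) : Matrix (Cosets F n) (Cosets F n) K := fun C D =>
  if D = C then
    (if h : pivotRow F n C < n then
      x ⟨pivotRow F n C, h⟩ / (Fintype.card F : K) ^ (n - 1 - pivotRow F n C)
    else 0)
  else 0

/-- Matrix of the q-Tsetlin library operator
`T_{G/B}(q,x) = (∑_{i=1}^n T_{i-1} ⋯ T_1) ∘ X_{G/B}(q,x)` on `ℂ[G/B]` (row convention). -/
def TGB (x : Fin n → K) : Matrix (Cosets F n) (Cosets F n) K :=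
  (∑ k ∈ Finset.range n, prodGenGB F n K k) * XGB F n K x

/-- The coset `gB` belongs to the double coset `[π] = B⁻ π B`. -/
def inDC (π : Equiv.Perm (Fin n)) (C : Cosets F n) : Prop :=
  ∃ l b : GLn F n, lowerTri (l : Matrix (Fin n) (Fin n) F) ∧
    upperTri (b : Matrix (Fin n) (Fin n) F) ∧
    C = QuotientGroup.mk (l * permGL F n π * b)

/-- `b_k(s) = #{t ∈ {π_1,…,π_{k-1}} : t > s}` — here `k` is a 0-based position (so the
positions strictly before `k` are the paper's `1,…,k-1`) and `s` a 0-based value. -/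
def bCount {n : ℕ} (π : Equiv.Perm (Fin n)) (k : Fin n) (s : Fin n) : ℕ :=
  (Finset.univ.filter fun j : Fin n => j < k ∧ s < π j).card

/-- `f(π_1, …, π_k) = ∑_{s ∈ {π_1,…,π_k}, s ≤ π_k} (x_s / q^{n-s-b_k(s)}) (q-1)^{χ(s<π_k)}`,
the sum being over positions `j ≤ k` with `π_j ≤ π_k` (values are 0-based, so the paper's
value `s` is `(π j : ℕ) + 1`). -/
def fGB (n : ℕ) (q : ℝ) (x : Fin n → ℝ) (π : Equiv.Perm (Fin n)) (k : Fin n) : ℝ :=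
  ∑ j ∈ Finset.univ.filter fun j : Fin n => j ≤ k ∧ π j ≤ π k,
    x (π j) / q ^ ((n : ℤ) - ((π j : ℕ) + 1) - bCount π k (π j))
      * (q - 1) ^ (if π j < π k then 1 else 0)

/-- The stationary distribution formula for the q-Tsetlin library on flags, evaluated at
the distinguished coset `F_π`:
`Ψ_{F_π} = ∏_{k=1}^n f(π_1,…,π_k) / (1 - ∑_{s ∈ {π_1,…,π_{k-1}}} x_s / q^{n-s-b_k(s)})`. -/
def psiGB (n : ℕ) (q : ℝ) (x : Fin n → ℝ) (π : Equiv.Perm (Fin n)) : ℝ :=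
  ∏ k : Fin n,
    fGB n q x π k /
      (1 - ∑ j ∈ Finset.univ.filter fun j : Fin n => j < k,
        x (π j) / q ^ ((n : ℤ) - ((π j : ℕ) + 1) - bCount π k (π j)))

/-- `Ψ` is a stationary distribution: a nonnegative row vector with entries summing to `1`
such that `Ψ · T = c Ψ`. -/
def IsStationary {P : Type} [Fintype P] (T : Matrix P P ℝ) (c : ℝ) (Ψ : P → ℝ) : Prop :=
  (∀ p, 0 ≤ Ψ p) ∧ (∑ p, Ψ p = 1) ∧ Matrix.vecMul Ψ T = c • Ψ

section Abstract

open Submodule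

/-- prefix spans of a word -/
def preS {R V : Type} [Field R] [AddCommGroup V] [Module R V] : List V → Set (Submodule R V)
  | [] => ∅
  | v :: S => insert ⊥ ((fun U => span R {v} ⊔ U) '' preS S)

/-- span of a word -/
def lspan {R V : Type} [Field R] [AddCommGroup V] [Module R V] (S : List V) : Submodule R V :=
  span R {v | v ∈ S}

section
variable {R V : Type} [Field R] [AddCommGroup V] [Module R V]

lemma lspan_nil : lspan (R := R) ([] : List V) = ⊥ := by
  simp [lspan]

lemma lspan_cons (v : V) (S : List V) : lspan (R := R) (v :: S) = span R {v} ⊔ lspan S := by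
  unfold lspan
  rw [← span_union]
  congr 1
  ext u
  simp

lemma lspan_append (S T : List V) : lspan (R := R) (S ++ T) = lspan S ⊔ lspan T := by
  unfold lspan
  rw [← span_union]
  congr 1
  ext u
  simp

lemma lspan_snoc (S : List V) (v : V) : lspan (R := R) (S ++ [v]) = lspan S ⊔ span R {v} := by
  rw [lspan_append, lspan_cons, lspan_nil, sup_bot_eq]

lemma lspan_snoc_mem (S : List V) (v : V) (h : v ∈ lspan (R := R) S) :
    lspan (R := R) (S ++ [v]) = lspan S := by
  rw [lspan_snoc, sup_eq_left, span_singleton_le_iff_mem]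
  exact h

lemma lspan_lt (S : List V) (v : V) (h : v ∉ lspan (R := R) S) :
    lspan (R := R) S < lspan (R := R) (S ++ [v]) := by
  rw [lspan_snoc]
  refine lt_of_le_of_ne le_sup_left fun h' => h ?_
  rw [h']
  exact mem_sup_right (mem_span_singleton_self v)

lemma codim_lt [Finite V] (S : List V) (v : V) (h : v ∉ lspan (R := R) S) :
    Module.finrank R V - Module.finrank R (lspan (R := R) (S ++ [v])) <
    Module.finrank R V - Module.finrank R (lspan (R := R) S) := by
  have h1 := Submodule.finrank_lt_finrank_of_lt (lspan_lt S v h)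
  have h2 := Submodule.finrank_le (lspan (R := R) (S ++ [v]))
  omega
end

/-- abstract flag data -/
structure FlagData (R V P : Type) [Field R] [AddCommGroup V] [Module R V] where
  FS : P → Set (Submodule R V)
  inj' : ∀ C D, FS C ⊆ FS D → C = D
  bot : ∀ C, ⊥ ∈ FS C
  act : V → P → P
  hact : ∀ v C, FS (act v C) = insert ⊥ ((fun U => span R {v} ⊔ U) '' FS C)
  C0 : P
  wt : V → ℝ
  wt_nonneg : ∀ v, 0 ≤ wt v

namespace FlagData
variable {R V P : Type} [Field R] [AddCommGroup V] [Module R V] (A : FlagData R V P)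

lemma inj : Function.Injective A.FS := fun C D h => A.inj' C D h.le

def word (S : List V) (C : P) : P := S.foldr A.act C

lemma word_append (S T : List V) (C : P) : A.word (S ++ T) C = A.word S (A.word T C) := by
  simp [word]

lemma word_cons (v : V) (S : List V) (C : P) : A.word (v :: S) C = A.act v (A.word S C) := rfl

lemma FS_word (S : List V) (C : P) :
    A.FS (A.word S C) = preS S ∪ (fun U => lspan (R := R) S ⊔ U) '' A.FS C := by
  induction S with
  | nil => simp [word, preS, lspan_nil]
  | cons v S ih =>
    rw [word_cons, A.hact, ih, preS, Set.image_union, Set.insert_union, Set.image_image]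
    simp only [lspan_cons, sup_assoc]

lemma word_act (S : List V) (v : V) (h : v ∈ lspan (R := R) S) (C : P) :
    A.word S (A.act v C) = A.word S C := by
  apply A.inj
  rw [FS_word, FS_word, A.hact]
  congr 1
  have hv : lspan (R := R) S ⊔ span R {v} = lspan S := by
    rw [sup_eq_left, span_singleton_le_iff_mem]; exact h
  rw [Set.image_insert_eq, Set.image_image]
  simp only [← sup_assoc, hv]
  apply Set.insert_eq_of_mem
  exact ⟨⊥, A.bot C, rfl⟩

lemma word_top (S : List V) (h : lspan (R := R) S = ⊤) (C D : P) :
    A.word S C = A.word S D := by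
  apply A.inj
  rw [FS_word, FS_word, h]
  congr 1
  ext U
  simp only [top_sup_eq, Set.mem_image]
  constructor
  · rintro ⟨_, _, h⟩; exact ⟨⊥, A.bot _, h⟩
  · rintro ⟨_, _, h⟩; exact ⟨⊥, A.bot _, h⟩

variable [Fintype V]

def W (U : Submodule R V) : ℝ := ∑ v, if v ∈ U then A.wt v else 0

def h {R V P : Type} [Field R] [AddCommGroup V] [Module R V] [Fintype V]
    (A : FlagData R V P) (f : P → ℝ) (S : List V) : ℝ :=
  if lspan (R := R) S = ⊤ then f (A.word S A.C0) else
    (∑ v, if hv : v ∈ lspan (R := R) S then 0 else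
      have hlt := codim_lt S v hv
      A.wt v * h A f (S ++ [v]))
      / (1 - A.W (lspan S))
termination_by Module.finrank R V - Module.finrank R (lspan (R := R) S)
decreasing_by exact hlt

lemma h_top (f : P → ℝ) (S : List V) (hS : lspan (R := R) S = ⊤) :
    A.h f S = f (A.word S A.C0) := by
  rw [h, if_pos hS]

lemma h_rec (f : P → ℝ) (S : List V) (hS : lspan (R := R) S ≠ ⊤) :
    A.h f S = (∑ v, if v ∈ lspan (R := R) S then 0 else A.wt v * A.h f (S ++ [v]))
      / (1 - A.W (lspan S)) := by
  rw [h, if_neg hS]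
  simp only [dite_eq_ite]

/-- induction principle on words -/
lemma word_ind {p : List V → Prop} 
    (htop : ∀ S, lspan (R := R) S = ⊤ → p S)
    (hstep : ∀ S, lspan (R := R) S ≠ ⊤ → (∀ v, v ∉ lspan (R := R) S → p (S ++ [v])) → p S) :
    ∀ S, p S := by
  intro S
  induction hm : Module.finrank R V - Module.finrank R (lspan (R := R) S) using
    Nat.strong_induction_on generalizing S with
  | _ m ih =>
    by_cases hS : lspan (R := R) S = ⊤
    · exact htop S hS
    · refine hstep S hS fun v hv => ih _ ?_ (S ++ [v]) rfl
      rw [← hm]; exact codim_lt S v hv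

lemma h_absorb (f : P → ℝ) (S : List V) (v : V) (hv : v ∈ lspan (R := R) S) :
    ∀ T : List V, A.h f (S ++ v :: T) = A.h f (S ++ T) := by
  have key : ∀ L : List V, ∀ T, L = S ++ T → A.h f (S ++ v :: T) = A.h f (S ++ T) := by
    have e : ∀ T : List V, lspan (R := R) (S ++ v :: T) = lspan (S ++ T) := by
      intro T
      rw [show S ++ v :: T = (S ++ [v]) ++ T by simp, lspan_append, lspan_snoc_mem S v hv,
        lspan_append]
    refine word_ind (R := R) ?_ ?_
    · rintro L hL T rfl
      rw [h_top _ _ _ hL, h_top _ _ _ ((e T).trans hL), word_append, word_append, word_cons,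
        word_act _ _ _ hv]
    · rintro L hL ih T rfl
      rw [h_rec _ _ _ hL, h_rec _ _ _ (by rw [e]; exact hL), e]
      congr 1
      refine Finset.sum_congr rfl fun u _ => ?_
      split_ifs with hu
      · rfl
      · rw [List.append_assoc, List.append_assoc, List.cons_append]
        rw [ih u hu (T ++ [u]) (by simp)]
  exact fun T => key _ T rfl


/-- a function absorbing & harmonic and with right boundary values is h -/
lemma rec_of_harm (h1 : ∑ v, A.wt v = 1)
    (hW : ∀ U : Submodule R V, U ≠ ⊤ → A.W U < 1) (u : List V → ℝ) (S : List V) (hS : lspan (R := R) S ≠ ⊤)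
    (harm : u S = ∑ v, A.wt v * u (S ++ [v]))
    (habs : ∀ v ∈ lspan (R := R) S, u (S ++ [v]) = u S) :
    u S = (∑ v, if v ∈ lspan (R := R) S then 0 else A.wt v * u (S ++ [v]))
      / (1 - A.W (lspan S)) := by
  have hne : 1 - A.W (lspan S) ≠ 0 := by
    have := hW _ hS; intro h'; linarith
  rw [eq_div_iff hne]
  have : u S = A.W (lspan S) * u S + 
      ∑ v, if v ∈ lspan (R := R) S then 0 else A.wt v * u (S ++ [v]) := by
    conv_lhs => rw [harm]
    rw [W, Finset.sum_mul, ← Finset.sum_add_distrib]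
    refine Finset.sum_congr rfl fun v _ => ?_
    split_ifs with hv
    · rw [habs v hv, add_zero]
    · ring
  linarith

lemma h_harm (h1 : ∑ v, A.wt v = 1)
    (hW : ∀ U : Submodule R V, U ≠ ⊤ → A.W U < 1) (f : P → ℝ) (S : List V) : A.h f S = ∑ v, A.wt v * A.h f (S ++ [v]) := by
  have habs : ∀ v ∈ lspan (R := R) S, A.h f (S ++ [v]) = A.h f S := fun v hv => by
    simpa using A.h_absorb f S v hv []
  by_cases hS : lspan (R := R) S = ⊤
  · rw [Finset.sum_congr rfl fun v _ => by rw [habs v (by rw [hS]; trivial)], ← Finset.sum_mul, h1,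
      one_mul]
  · have hne : 1 - A.W (lspan S) ≠ 0 := by
      have := hW _ hS; intro h'; linarith
    have h2 := A.h_rec f S hS
    rw [eq_div_iff hne] at h2
    have : ∑ v, A.wt v * A.h f (S ++ [v]) = A.W (lspan S) * A.h f S + 
      ∑ v, if v ∈ lspan (R := R) S then 0 else A.wt v * A.h f (S ++ [v]) := by
      rw [W, Finset.sum_mul, ← Finset.sum_add_distrib]
      refine Finset.sum_congr rfl fun v _ => ?_
      split_ifs with hv
      · rw [habs v hv, add_zero]
      · ring
    linarith

lemma eq_h (h1 : ∑ v, A.wt v = 1)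
    (hW : ∀ U : Submodule R V, U ≠ ⊤ → A.W U < 1) (f : P → ℝ) (u : List V → ℝ) 
    (htop : ∀ S, lspan (R := R) S = ⊤ → u S = f (A.word S A.C0))
    (harm : ∀ S, u S = ∑ v, A.wt v * u (S ++ [v]))
    (habs : ∀ S, ∀ v ∈ lspan (R := R) S, u (S ++ [v]) = u S) : ∀ S, u S = A.h f S := by
  refine word_ind (R := R) ?_ ?_
  · intro S hS
    rw [htop S hS, h_top _ _ _ hS]
  · intro S hS ih
    rw [A.rec_of_harm h1 hW u S hS (harm S) (habs S), A.h_rec f S hS]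
    congr 1
    refine Finset.sum_congr rfl fun v _ => ?_
    split_ifs with hv
    · rfl
    · rw [ih v hv]

/-- the averaging operator -/
def op (f : P → ℝ) : P → ℝ := fun C => ∑ v, A.wt v * f (A.act v C)

lemma h_op (h1 : ∑ v, A.wt v = 1)
    (hW : ∀ U : Submodule R V, U ≠ ⊤ → A.W U < 1) (f : P → ℝ) (S : List V) : A.h (A.op f) S = ∑ v, A.wt v * A.h f (v :: S) := by
  symm
  revert S
  apply A.eq_h h1 hW
  · intro S hS
    refine Finset.sum_congr rfl fun v _ => ?_
    rw [h_top, word_cons]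
    rw [lspan_cons, hS, sup_top_eq]
  · intro S
    rw [Finset.sum_congr rfl fun v _ => by rw [A.h_harm h1 hW f (v :: S), Finset.mul_sum],
      Finset.sum_comm]
    refine Finset.sum_congr rfl fun v _ => ?_
    rw [Finset.mul_sum]
    refine Finset.sum_congr rfl fun u _ => ?_
    simp only [List.cons_append]
    ring
  · intro S v hv
    refine Finset.sum_congr rfl fun u _ => ?_
    have := A.h_absorb f (u :: S) v (by rw [lspan_cons]; exact mem_sup_right hv) []
    simp only [List.cons_append, List.append_nil] at this
    rw [this]

lemma h_op_nil (h1 : ∑ v, A.wt v = 1)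
    (hW : ∀ U : Submodule R V, U ≠ ⊤ → A.W U < 1) (f : P → ℝ) : A.h (A.op f) [] = A.h f [] := by
  rw [A.h_op h1 hW, A.h_harm h1 hW f []]
  rfl

lemma h_one (h1 : ∑ v, A.wt v = 1)
    (hW : ∀ U : Submodule R V, U ≠ ⊤ → A.W U < 1) : ∀ S, A.h (fun _ => 1) S = 1 := by
  intro S
  symm
  revert S
  apply A.eq_h h1 hW
  · intros; rfl
  · intro S; simp [h1]
  · intros; rfl

lemma h_unique (h1 : ∑ v, A.wt v = 1)
    (hW : ∀ U : Submodule R V, U ≠ ⊤ → A.W U < 1) [Fintype P] (Ψ : P → ℝ) (hs : ∑ C, Ψ C = 1)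
    (hst : ∀ f : P → ℝ, ∑ C, Ψ C * A.op f C = ∑ C, Ψ C * f C) (f : P → ℝ) :
    ∑ C, Ψ C * f C = A.h f [] := by
  have := A.eq_h h1 hW f (fun S => ∑ C, Ψ C * f (A.word S C)) ?_ ?_ ?_ []
  · simpa [word] using this
  · intro S hS
    rw [Finset.sum_congr rfl fun C _ => by rw [A.word_top S hS C A.C0], ← Finset.sum_mul, hs, one_mul]
  · intro S
    rw [← hst (fun C => f (A.word S C))]
    simp only [op, Finset.mul_sum]
    rw [Finset.sum_comm]
    refine Finset.sum_congr rfl fun v _ => Finset.sum_congr rfl fun C _ => ?_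
    rw [word_append]
    simp only [word, List.foldr]
    ring
  · intro S v hv
    refine Finset.sum_congr rfl fun C _ => ?_
    rw [word_append]
    congr 2
    exact A.word_act S v hv C

lemma h_sum [Fintype P] (c : P → ℝ) (f : P → P → ℝ) :
    ∀ S, A.h (fun D => ∑ C, c C * f C D) S = ∑ C, c C * A.h (f C) S := by
  refine word_ind (R := R) ?_ ?_
  · intro S hS
    rw [h_top _ _ _ hS]
    refine Finset.sum_congr rfl fun C _ => ?_
    rw [h_top _ _ _ hS]
  · intro S hS ih
    have e : ∀ C, A.h (f C) S = _ := fun C => A.h_rec (f C) S hS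
    rw [h_rec _ _ _ hS]
    simp only [e]
    simp only [mul_div_assoc', ← Finset.sum_div]
    congr 1
    simp only [Finset.mul_sum]
    rw [Finset.sum_comm]
    refine Finset.sum_congr rfl fun v _ => ?_
    split_ifs with hv
    · simp
    · rw [ih v hv, Finset.mul_sum]
      refine Finset.sum_congr rfl fun C _ => ?_
      ring

lemma h_nonneg (hW : ∀ U : Submodule R V, U ≠ ⊤ → A.W U < 1) (f : P → ℝ) (hf : ∀ C, 0 ≤ f C) : ∀ S, 0 ≤ A.h f S := by
  refine word_ind (R := R) ?_ ?_
  · intro S hS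
    rw [h_top _ _ _ hS]; exact hf _
  · intro S hS ih
    rw [h_rec _ _ _ hS]
    apply div_nonneg
    · refine Finset.sum_nonneg fun v _ => ?_
      split_ifs with hv
      · exact le_rfl
      · exact mul_nonneg (A.wt_nonneg v) (ih v hv)
    · linarith [hW _ hS]

/-- the stationary distribution -/
def Psi (D : P) : ℝ := A.h (fun C => if C = D then 1 else 0) []

lemma sum_Psi [Fintype P] (f : P → ℝ) : ∑ D, A.Psi D * f D = A.h f [] := by
  have := A.h_sum f (fun D C => if C = D then 1 else 0) []
  simp only [mul_ite, mul_one, mul_zero, Finset.sum_ite_eq, Finset.mem_univ, if_true] at this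
  rw [show A.h f [] = _ from this]
  exact Finset.sum_congr rfl fun D _ => mul_comm _ _

lemma preS_snoc (S : List V) (v : V) :
    preS (R := R) (S ++ [v]) = preS S ∪ {lspan S} := by
  induction S with
  | nil => simp [preS, lspan_nil]
  | cons u S ih =>
    rw [List.cons_append, preS, ih, preS, Set.image_union, Set.insert_union, Set.image_singleton,
      lspan_cons]

/-- product formula -/
lemma Psi_formula (h1 : ∑ v, A.wt v = 1)
    (hW : ∀ U : Submodule R V, U ≠ ⊤ → A.W U < 1) (D : P) (n : ℕ)
    (sp : ℕ → Submodule R V) (hsp : A.FS D = Set.range sp)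
    (hfr : ∀ k, Module.finrank R (sp k) = min k n) (hn : Module.finrank R V = n)
    (hmono : Monotone sp) :
    A.Psi D = ∏ k ∈ Finset.range n, (A.W (sp (k + 1)) - A.W (sp k)) / (1 - A.W (sp k)) := by
  have hbad : ∀ S : List V, ¬ (preS S ∪ {lspan S} ⊆ A.FS D) →
      A.h (fun C => if C = D then 1 else 0) S = 0 := by
    refine word_ind (R := R) ?_ ?_
    · intro S hS hb
      rw [h_top _ _ _ hS, if_neg]
      intro hD
      apply hb
      rw [← hD, FS_word]
      apply Set.union_subset_union_right
      intro U hU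
      exact ⟨⊥, A.bot _, by simpa using hU.symm⟩
    · intro S hS ih hb
      rw [h_rec _ _ _ hS, Finset.sum_eq_zero, zero_div]
      intro v _
      split_ifs with hv
      · rfl
      · rw [ih v hv, mul_zero]
        intro hg
        apply hb
        rw [← preS_snoc (R := R) S v]
        exact Set.subset_union_left.trans hg
  have hgood : ∀ S : List V, preS S ∪ {lspan S} ⊆ A.FS D → ∀ k ≤ n, lspan (R := R) S = sp k →
      A.h (fun C => if C = D then 1 else 0) S =
        ∏ j ∈ Finset.Ico k n, (A.W (sp (j + 1)) - A.W (sp j)) / (1 - A.W (sp j)) := by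
    refine word_ind (R := R) ?_ ?_
    · intro S hS hg k hk hSk
      have : k = n := by
        have h2 := hfr k
        rw [← hSk, hS, finrank_top, hn] at h2
        omega
      rw [this, Finset.Ico_self, Finset.prod_empty, h_top _ _ _ hS, if_pos]
      apply A.inj'
      rw [FS_word]
      refine subset_trans (Set.union_subset_union_right _ ?_) hg
      rintro _ ⟨U, _, rfl⟩
      simp [hS]
    · intro S hS ih hg k hk hSk
      have hkn : k < n := by
        refine lt_of_le_of_ne hk fun hkn => hS ?_
        rw [hSk]
        apply Submodule.eq_top_of_finrank_eq
        rw [hfr, hn, hkn, min_self]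
      rw [← Finset.prod_Ico_consecutive _ (Nat.le_succ k) hkn, Finset.prod_Ico_succ_top le_rfl,
        Finset.Ico_self, Finset.prod_empty, one_mul, h_rec _ _ _ hS, hSk, div_mul_eq_mul_div]
      congr 1
      rw [W, W, ← Finset.sum_sub_distrib, Finset.sum_mul]
      refine Finset.sum_congr rfl fun v _ => ?_
      by_cases hv : v ∈ sp k
      · rw [if_pos hv, if_pos hv, if_pos (hmono (Nat.le_succ k) hv)]
        simp
      · rw [if_neg hv, if_neg hv, sub_zero]
        have hv' : v ∉ lspan (R := R) S := by rwa [hSk]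
        have hlt := lspan_lt S v hv'
        by_cases hv2 : v ∈ sp (k + 1)
        · rw [if_pos hv2]
          have e : lspan (R := R) (S ++ [v]) = sp (k + 1) := by
            apply Submodule.eq_of_le_of_finrank_le
            · rw [lspan_snoc, hSk]
              refine sup_le (hmono (Nat.le_succ k)) ?_
              rwa [span_singleton_le_iff_mem]
            · have h3 := Submodule.finrank_lt_finrank_of_lt hlt
              rw [hSk, hfr] at h3
              rw [hfr]
              omega
          rw [ih v hv' ?_ (k + 1) hkn e]
          rw [preS_snoc, e]
          refine Set.union_subset hg ?_
          rw [hsp]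
          rintro _ rfl
          exact ⟨_, rfl⟩
        · rw [if_neg hv2, zero_mul, hbad, mul_zero]
          intro hg2
          have h3 : lspan (R := R) (S ++ [v]) ∈ A.FS D := hg2 (Or.inr rfl)
          rw [hsp] at h3
          obtain ⟨j, hj⟩ := h3
          have hkj : k < j := by
            by_contra hc
            have := hmono (not_lt.mp hc)
            rw [hj, ← hSk] at this
            exact absurd hlt this.not_gt
          have h4 : sp (k + 1) = lspan (S ++ [v]) := by
            rw [← hj]
            apply Submodule.eq_of_le_of_finrank_le (hmono hkj)
            have h5 := Submodule.finrank_add_le_finrank_add_finrank (sp k) (span R {v})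
            rw [← hSk, ← lspan_snoc, ← hj, hSk, hfr, hfr] at h5
            have h6 : Module.finrank R (span R {v}) ≤ 1 := by
              simpa using finrank_span_le_card (R := R) ({v} : Set V)
            rw [hfr, hfr]
            omega
          apply hv2
          rw [h4, lspan_snoc]
          exact mem_sup_right (mem_span_singleton_self v)
  have h0 : sp 0 = ⊥ := by
    rw [← Submodule.finrank_eq_zero (R := R), hfr]; simp
  rw [Psi, hgood [] ?_ 0 (Nat.zero_le _) (by rw [lspan_nil, h0]), Finset.range_eq_Ico]
  rw [preS, lspan_nil, Set.empty_union, Set.singleton_subset_iff]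
  exact A.bot D

end FlagData
end Abstract

section Concrete

open Submodule

variable {F : Type} [Field F] [Fintype F] [DecidableEq F] {n : ℕ}

/-- coordinate flag -/
def Ef (F : Type) [Field F] (n k : ℕ) : Submodule F (Fin n → F) where
  carrier := {v | ∀ j : Fin n, k ≤ j.val → v j = 0}
  add_mem' := by
    intro a b ha hb j hj
    simp [ha j hj, hb j hj]
  zero_mem' := by intro j _; rfl
  smul_mem' := by
    intro c a ha j hj
    simp [ha j hj]

lemma mem_Ef {k : ℕ} {v : Fin n → F} : v ∈ Ef F n k ↔ ∀ j : Fin n, k ≤ j.val → v j = 0 := Iff.rfl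

lemma Ef_mono : Monotone (Ef F n) := fun _ _ hab _ hv j hj => hv j (hab.trans hj)

lemma Ef_zero : Ef F n 0 = ⊥ := by
  ext v
  rw [mem_Ef, Submodule.mem_bot]
  constructor
  · intro h; ext j; exact h j (Nat.zero_le _)
  · rintro rfl j _; rfl

lemma Ef_top {k : ℕ} (hk : n ≤ k) : Ef F n k = ⊤ := by
  rw [eq_top_iff]
  intro v _ j hj
  have := j.isLt
  omega

/-- basis vector -/
def ee (k : Fin n) : Fin n → F := Pi.single k 1

lemma ee_mem (k : Fin n) : (ee k : Fin n → F) ∈ Ef F n (k + 1) := by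
  intro j hj
  simp only [ee]
  rw [Pi.single_eq_of_ne]
  rintro rfl
  omega

lemma ee_not_mem (k : Fin n) : (ee k : Fin n → F) ∉ Ef F n k := by
  intro h
  have := h k le_rfl
  simp [ee] at this

lemma Ef_succ (k : Fin n) : Ef F n (k + 1) = Ef F n k ⊔ span F {ee k} := by
  apply le_antisymm
  · intro v hv
    rw [show v = (v - v k • ee k) + v k • ee k by simp]
    refine add_mem (mem_sup_left ?_) (mem_sup_right (smul_mem _ _ (mem_span_singleton_self _)))
    intro j hj
    by_cases hjk : j = k
    · subst hjk; simp [ee]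
    · have : v j = 0 := hv j (by
        have : (j : ℕ) ≠ k := fun h => hjk (Fin.ext h)
        omega)
      simp [ee, this, Pi.single_eq_of_ne hjk]
  · refine sup_le (Ef_mono (Nat.le_succ _)) ?_
    rw [span_singleton_le_iff_mem]
    exact ee_mem k

lemma Ef_lt (k : Fin n) : Ef F n k < Ef F n (k + 1) := by
  refine lt_of_le_of_ne (Ef_mono (Nat.le_succ _)) fun h => ee_not_mem (F := F) k ?_
  rw [h]; exact ee_mem k

lemma finrank_Ef (k : ℕ) : Module.finrank F (Ef F n k) = min k n := by
  have htop : ∀ k, n ≤ k → Module.finrank F (Ef F n k) = n := by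
    intro k hk
    rw [Ef_top hk, finrank_top, Module.finrank_fin_fun]
  have lt : ∀ k, k < n → Module.finrank F (Ef F n k) < Module.finrank F (Ef F n (k+1)) := 
    fun k hk => Submodule.finrank_lt_finrank_of_lt (Ef_lt ⟨k, hk⟩)
  have lo : ∀ k, k ≤ n → k ≤ Module.finrank F (Ef F n k) := by
    intro k
    induction k with
    | zero => intro _; exact Nat.zero_le _
    | succ k ih =>
      intro h
      have := ih (by omega)
      have := lt k (by omega)
      omega
  have hi : ∀ m, m ≤ n → Module.finrank F (Ef F n (n - m)) ≤ n - m := by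
    intro m
    induction m with
    | zero => intro _; exact (htop n le_rfl).le
    | succ m ih =>
      intro h
      have := ih (by omega)
      have := lt (n - (m + 1)) (by omega)
      rw [show n - (m + 1) + 1 = n - m by omega] at this
      omega
  rcases le_total n k with hk | hk
  · rw [htop k hk, min_eq_right hk]
  · have h1 := lo k hk
    have h2 := hi (n - k) (by omega)
    rw [show n - (n - k) = k by omega] at h2
    omega

/-- flag of an invertible matrix -/
def spG (g : GLn F n) (k : ℕ) : Submodule F (Fin n → F) :=
  (Ef F n k).map (Matrix.mulVecLin (g : Matrix (Fin n) (Fin n) F))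

lemma gl_inj (g : GLn F n) :
    Function.Injective (Matrix.mulVecLin (g : Matrix (Fin n) (Fin n) F)) := by
  intro u v h
  have := congrArg (fun w => (((g⁻¹ : GLn F n) : Matrix (Fin n) (Fin n) F)).mulVec w) h
  simpa [Matrix.mulVec_mulVec] using this

lemma finrank_map_gl (g : GLn F n) (U : Submodule F (Fin n → F)) :
    Module.finrank F (U.map (Matrix.mulVecLin (g : Matrix (Fin n) (Fin n) F))) =
      Module.finrank F U :=
  (LinearEquiv.finrank_eq (Submodule.equivMapOfInjective _ (gl_inj g) U)).symm

lemma finrank_spG (g : GLn F n) (k : ℕ) : Module.finrank F (spG g k) = min k n := by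
  rw [spG, finrank_map_gl, finrank_Ef]

lemma spG_mul (g p : GLn F n) (k : ℕ) :
    spG (g * p) k = (spG p k).map (Matrix.mulVecLin (g : Matrix (Fin n) (Fin n) F)) := by
  rw [spG, spG, ← Submodule.map_comp, ← Matrix.mulVecLin_mul]
  rfl

lemma spG_mono (g : GLn F n) : Monotone (spG g) := fun _ _ h => Submodule.map_mono (Ef_mono h)

lemma spG_eq_of_le (g : GLn F n) (k : ℕ) (U : Submodule F (Fin n → F))
    (h : Module.finrank F U = min k n) (hle : U ≤ spG g k) : U = spG g k := by
  apply Submodule.eq_of_le_of_finrank_le hle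
  rw [h, finrank_spG]

lemma spG_upper (b : GLn F n) (hb : b ∈ Bsub F n) (k : ℕ) : spG b k = Ef F n k := by
  apply Submodule.eq_of_le_of_finrank_le
  · rintro _ ⟨u, hu, rfl⟩ i hi
    simp only [Matrix.mulVecLin_apply, Matrix.mulVec, dotProduct]
    refine Finset.sum_eq_zero fun j _ => ?_
    rcases lt_or_ge j i with h | h
    · rw [hb i j h, zero_mul]
    · rw [hu j (le_trans hi h), mul_zero]
  · rw [finrank_spG, finrank_Ef]

lemma spG_mul_upper (g b : GLn F n) (hb : b ∈ Bsub F n) (k : ℕ) : spG (g * b) k = spG g k := by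
  rw [spG_mul, spG_upper b hb, spG]

/-- flag of a coset -/
def sp (C : Cosets F n) (k : ℕ) : Submodule F (Fin n → F) := spG C.out k

lemma sp_mk (g : GLn F n) (k : ℕ) : sp (QuotientGroup.mk g : Cosets F n) k = spG g k := by
  obtain ⟨b, hb⟩ := QuotientGroup.mk_out_eq_mul (Bsub F n) g
  rw [sp, hb, spG_mul_upper _ _ b.2]

lemma finrank_sp (C : Cosets F n) (k : ℕ) : Module.finrank F (sp C k) = min k n := finrank_spG _ _
lemma sp_mono (C : Cosets F n) : Monotone (sp C) := spG_mono _

lemma sp_zero (C : Cosets F n) : sp C 0 = ⊥ := by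
  rw [← Submodule.finrank_eq_zero (R := F), finrank_sp]; simp

lemma sp_top (C : Cosets F n) {k : ℕ} (hk : n ≤ k) : sp C k = ⊤ := by
  apply Submodule.eq_top_of_finrank_eq
  rw [finrank_sp, Module.finrank_fin_fun, min_eq_right hk]

lemma sp_inj (C D : Cosets F n) (h : ∀ k, sp C k = sp D k) : C = D := by
  induction C using QuotientGroup.induction_on with
  | H g =>
  induction D using QuotientGroup.induction_on with
  | H d =>
  rw [QuotientGroup.eq]
  intro i j hij
  have h1 := h (j + 1)
  rw [sp_mk, sp_mk] at h1
  have h2 : (d : Matrix (Fin n) (Fin n) F).mulVec (ee j) ∈ spG g (j + 1) := by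
    rw [h1]
    exact ⟨ee j, ee_mem j, rfl⟩
  obtain ⟨u, hu, hu2⟩ := h2
  have h3 : ((g⁻¹ * d : GLn F n) : Matrix (Fin n) (Fin n) F).mulVec (ee j) = u := by
    rw [Units.val_mul, ← Matrix.mulVec_mulVec, ← hu2, Matrix.mulVecLin_apply, 
      Matrix.mulVec_mulVec]
    simp
  have h4 := hu i (by exact hij)
  rw [← h3] at h4
  simpa [ee] using h4

lemma sp_eq_of_finrank (C : Cosets F n) (j k : ℕ) (h : Module.finrank F (sp C j) = min k n) :
    sp C j = sp C k := by
  rcases le_total j k with hjk | hjk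
  · apply Submodule.eq_of_le_of_finrank_eq (sp_mono C hjk)
    rw [h, finrank_sp]
  · symm
    apply Submodule.eq_of_le_of_finrank_eq (sp_mono C hjk)
    rw [h, finrank_sp]

lemma sp_inj' (C D : Cosets F n) (h : Set.range (sp C) ⊆ Set.range (sp D)) : C = D := by
  apply sp_inj
  intro k
  obtain ⟨j, hj⟩ := h ⟨k, rfl⟩
  rw [← hj]
  apply sp_eq_of_finrank
  rw [hj, finrank_sp]

lemma sp_exists (Wc : ℕ → Submodule F (Fin n → F)) (hm : ∀ k, k < n → Wc k ≤ Wc (k + 1))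
    (hf : ∀ k, k ≤ n → Module.finrank F (Wc k) = k) :
    ∃ C : Cosets F n, ∀ k, k ≤ n → sp C k = Wc k := by
  have hex : ∀ k : Fin n, ∃ v, v ∈ Wc (k + 1) ∧ v ∉ Wc k := by
    intro k
    by_contra hc
    push Not at hc
    have : Wc (k + 1) ≤ Wc k := hc
    have := Submodule.finrank_mono this
    rw [hf _ k.2, hf _ k.2.le] at this
    omega
  choose v hv hv' using hex
  let M : Matrix (Fin n) (Fin n) F := Matrix.of fun i j => v j i
  have hM : ∀ k : Fin n, M.mulVecLin (ee k) = v k := by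
    intro k
    ext i
    simp [M, ee]
  have key : ∀ k, k ≤ n → (Ef F n k).map M.mulVecLin = Wc k := by
    intro k
    induction k with
    | zero =>
      intro h
      rw [Ef_zero, Submodule.map_bot]
      symm
      rw [← Submodule.finrank_eq_zero (R := F), hf 0 h]
    | succ k ih =>
      intro h
      have h1 := Ef_succ (F := F) (⟨k, h⟩ : Fin n)
      simp only at h1
      rw [h1, Submodule.map_sup, Submodule.map_span, Set.image_singleton, hM, ih (by omega)]
      apply Submodule.eq_of_le_of_finrank_le
      · refine sup_le (hm k h) ?_
        rw [span_singleton_le_iff_mem]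
        exact hv ⟨k, h⟩
      · rw [hf _ h]
        have : Wc k < Wc k ⊔ span F {v ⟨k, h⟩} := by
          refine lt_of_le_of_ne le_sup_left fun h' => hv' ⟨k, h⟩ ?_
          simp only
          rw [h']
          exact mem_sup_right (mem_span_singleton_self _)
        have := Submodule.finrank_lt_finrank_of_lt this
        rw [hf k (by omega)] at this
        omega
  have htop : Wc n = ⊤ := by
    apply Submodule.eq_top_of_finrank_eq
    rw [hf n le_rfl, Module.finrank_fin_fun]
  have hsurj : Function.Surjective M.mulVec := by
    intro u
    have hu : u ∈ (Ef F n n).map M.mulVecLin := by rw [key n le_rfl, htop]; trivial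
    obtain ⟨a, _, ha⟩ := hu
    exact ⟨a, ha⟩
  rw [Matrix.mulVec_surjective_iff_isUnit] at hsurj
  obtain ⟨g, hg⟩ := hsurj
  refine ⟨QuotientGroup.mk g, fun k hk => ?_⟩
  rw [sp_mk, spG, hg, key k hk]

/-- moving a vector to the front -/
lemma act_exists (v : Fin n → F) (C : Cosets F n) : ∃ D : Cosets F n,
    Set.range (sp D) = insert ⊥ ((fun U => span F {v} ⊔ U) '' Set.range (sp C)) := by
  have mem_sup : ∀ j, v ∈ sp C j → span F {v} ⊔ sp C j = sp C j := by
    intro j hj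
    rw [sup_eq_right, span_singleton_le_iff_mem]; exact hj
  have fr : ∀ j, v ∉ sp C j → Module.finrank F ↥(span F {v} ⊔ sp C j) = j + 1 := by
    intro j hj
    have hjn : j < n := by
      by_contra hc
      apply hj
      rw [sp_top C (not_lt.mp hc)]; trivial
    have h1 : sp C j < span F {v} ⊔ sp C j := by
      refine lt_of_le_of_ne le_sup_right fun h' => hj ?_
      rw [h']
      exact mem_sup_left (mem_span_singleton_self _)
    have h2 := Submodule.finrank_lt_finrank_of_lt h1
    have h3 := Submodule.finrank_add_le_finrank_add_finrank (span F {v}) (sp C j)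
    have h6 : Module.finrank F (span F {v}) ≤ 1 := by
      simpa using finrank_span_le_card (R := F) ({v} : Set (Fin n → F))
    rw [finrank_sp] at h2 h3
    omega
  let Wc : ℕ → Submodule F (Fin n → F) := fun j => 
    if v ∈ sp C j then sp C j else if j = 0 then ⊥ else span F {v} ⊔ sp C (j - 1)
  have hpred : ∀ j, v ∉ sp C j → v ∉ sp C (j - 1) := fun j hj h => hj (sp_mono C (Nat.sub_le _ _) h)
  have hm : ∀ k, k < n → Wc k ≤ Wc (k + 1) := by
    intro k hk
    simp only [Wc]
    by_cases h : v ∈ sp C k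
    · have h' := sp_mono C (Nat.le_succ k) h
      rw [if_pos h, if_pos h']
      exact sp_mono C (Nat.le_succ k)
    · rw [if_neg h]
      by_cases h2 : v ∈ sp C (k + 1)
      · rw [if_pos h2]
        split_ifs
        · exact bot_le
        · refine sup_le ?_ (sp_mono C (by omega))
          rw [span_singleton_le_iff_mem]; exact h2
      · rw [if_neg h2, if_neg (Nat.succ_ne_zero k)]
        split_ifs
        · exact bot_le
        · exact sup_le_sup_left (sp_mono C (by omega)) _
  have hf : ∀ k, k ≤ n → Module.finrank F (Wc k) = k := by
    intro k hk
    by_cases h1 : v ∈ sp C k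
    · have e : Wc k = sp C k := if_pos h1
      rw [e, finrank_sp, min_eq_left hk]
    · by_cases h2 : k = 0
      · have e : Wc k = ⊥ := (if_neg h1).trans (if_pos h2)
        rw [e, h2, finrank_bot]
      · have e : Wc k = span F {v} ⊔ sp C (k - 1) := (if_neg h1).trans (if_neg h2)
        rw [e, fr _ (hpred k h1)]
        omega
  obtain ⟨D, hD⟩ := sp_exists Wc hm hf
  · refine ⟨D, ?_⟩
    have hD' : ∀ k, sp D k = Wc k := by
      intro k
      rcases le_total k n with hk | hk
      · exact hD k hk
      · simp only [Wc]
        rw [sp_top C hk, sp_top D hk, if_pos Submodule.mem_top]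
    apply Set.Subset.antisymm
    · rintro _ ⟨j, rfl⟩
      rw [hD']
      simp only [Wc]
      split_ifs with h1 h2
      · right; exact ⟨_, ⟨j, rfl⟩, mem_sup j h1⟩
      · left; rfl
      · right; exact ⟨_, ⟨j - 1, rfl⟩, rfl⟩
    · apply Set.insert_subset
      · exact ⟨0, sp_zero D⟩
      · rintro _ ⟨_, ⟨j, rfl⟩, rfl⟩
        by_cases h : v ∈ sp C j
        · refine ⟨j, ?_⟩
          simp only
          rw [mem_sup j h, hD']
          simp only [Wc, if_pos h]
        · by_cases h2 : v ∈ sp C (j + 1)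
          · refine ⟨j + 1, ?_⟩
            rw [hD']
            simp only [Wc, if_pos h2]
            symm
            apply Submodule.eq_of_le_of_finrank_le
            · refine sup_le ?_ (sp_mono C (Nat.le_succ j))
              rw [span_singleton_le_iff_mem]; exact h2
            · rw [fr j h, finrank_sp]; omega
          · refine ⟨j + 1, ?_⟩
            rw [hD']
            simp [Wc, h2]

lemma move_iff (k : ℕ) (h : k < n) (p : GLn F n) (hp : ∀ j, j ≠ k + 1 → spG p j = Ef F n j)
    (C D : Cosets F n) : (QuotientGroup.mk (C.out * p) : Cosets F n) = D ↔
      (∀ j, j ≠ k + 1 → sp D j = sp C j) ∧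
      (C.out : Matrix (Fin n) (Fin n) F).mulVec
        ((p : Matrix (Fin n) (Fin n) F).mulVec (ee ⟨k, h⟩)) ∈ sp D (k + 1) := by
  have hne : ∀ j, j ≠ k + 1 → spG (C.out * p) j = sp C j := by
    intro j hj
    rw [spG_mul, hp j hj, sp, spG]
  constructor
  · rintro rfl
    constructor
    · intro j hj
      rw [sp_mk, hne j hj]
    · rw [sp_mk, spG_mul]
      exact ⟨_, ⟨_, ee_mem ⟨k, h⟩, rfl⟩, rfl⟩
  · rintro ⟨h1, h2⟩
    apply sp_inj
    intro j
    rw [sp_mk]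
    by_cases hj : j = k + 1
    · subst hj
      apply spG_eq_of_le
      · rw [finrank_spG]
      · have e := Ef_succ (F := F) (⟨k, h⟩ : Fin n)
        simp only at e
        have e2 := hp k (by omega)
        rw [spG] at e2
        rw [spG_mul, spG, e, Submodule.map_sup, e2, Submodule.map_sup, Submodule.map_span,
          Set.image_singleton, Submodule.map_span, Set.image_singleton]
        refine sup_le ?_ ?_
        · have e3 := h1 k (by omega)
          change sp C k ≤ sp D (k + 1)
          rw [← e3]
          exact sp_mono D (Nat.le_succ k)
        · rw [span_singleton_le_iff_mem]
          exact h2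
    · rw [hne j hj, h1 j hj]

lemma permGL_mulVec (π : Equiv.Perm (Fin n)) (u : Fin n → F) (i : Fin n) :
    ((permGL F n π : GLn F n) : Matrix (Fin n) (Fin n) F).mulVec u i = u (π⁻¹ i) := by
  change (permMat F n π).mulVec u i = _
  simp only [Matrix.mulVec, dotProduct, permMat, ite_mul, one_mul, zero_mul]
  rw [Finset.sum_eq_single (π⁻¹ i)]
  · simp
  · intro b _ hb
    rw [if_neg]
    rintro rfl
    simp at hb
  · simp

lemma spG_swap (k : ℕ) (h : k + 1 < n) (j : ℕ) (hj : j ≠ k + 1) :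
    spG (permGL F n (Equiv.swap ⟨k, Nat.lt_of_succ_lt h⟩ ⟨k + 1, h⟩)) j = Ef F n j := by
  apply Submodule.eq_of_le_of_finrank_le
  · rintro _ ⟨u, hu, rfl⟩ i hi
    rw [Matrix.mulVecLin_apply, permGL_mulVec]
    apply hu
    rw [Equiv.swap_inv, Equiv.swap_apply_def]
    split_ifs with h1 h2
    · subst h1; simp only at hi ⊢; omega
    · subst h2; simp only at hi ⊢; omega
    · exact hi
  · rw [finrank_spG, finrank_Ef]

lemma transv_mulVec (r c : Fin n) (h : r ≠ c) (t : F) (u : Fin n → F) (i : Fin n) :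
    ((transvGL F n r c h t : GLn F n) : Matrix (Fin n) (Fin n) F).mulVec u i =
      u i + if i = r then t * u c else 0 := by
  change (Matrix.transvection r c t).mulVec u i = _
  rw [Matrix.transvection, Matrix.add_mulVec, Matrix.one_mulVec, Pi.add_apply]
  congr 1
  simp only [Matrix.mulVec, dotProduct, Matrix.single_apply]
  split_ifs with hi
  · subst hi
    simp
  · refine Finset.sum_eq_zero fun j _ => ?_
    rw [if_neg, zero_mul]
    rintro ⟨rfl, _⟩
    exact hi rfl

lemma spG_transv (k : ℕ) (h : k + 1 < n) (hh) (t : F) (j : ℕ) (hj : j ≠ k + 1) :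
    spG (transvGL F n ⟨k + 1, h⟩ ⟨k, Nat.lt_of_succ_lt h⟩ hh t) j = Ef F n j := by
  apply Submodule.eq_of_le_of_finrank_le
  · rintro _ ⟨u, hu, rfl⟩ i hi
    rw [Matrix.mulVecLin_apply, transv_mulVec, hu i hi, zero_add]
    split_ifs with h1
    · subst h1
      rw [hu, mul_zero]
      simp only at hi ⊢
      omega
    · rfl
  · rw [finrank_spG, finrank_Ef]

lemma genGB_eq (k : ℕ) (h : k + 1 < n) (C D : Cosets F n) :
    genGB F n ℝ k C D = if (D ≠ C ∧ ∀ j, j ≠ k + 1 → sp D j = sp C j) then 1 else 0 := by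
  have hk : k < n := Nat.lt_of_succ_lt h
  rw [genGB, dif_pos h]
  have m1 := move_iff k hk _ (spG_swap k h) C D
  have m2 : ∀ hh t, _ := fun hh t => move_iff k hk _ (spG_transv k h hh t) C D
  simp only [m1, m2]
  by_cases h1 : ∀ j, j ≠ k + 1 → sp D j = sp C j
  swap
  · simp [h1]
  have h1' : (∀ j, j ≠ k + 1 → sp D j = sp C j) ↔ True := iff_true_intro h1
  simp only [h1', true_and, and_true]
  set U : Submodule F (Fin n → F) := (sp D (k + 1)).comap
    (Matrix.mulVecLin (C.out : Matrix (Fin n) (Fin n) F)) with hU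
  have hmem : ∀ u, (C.out : Matrix (Fin n) (Fin n) F).mulVec u ∈ sp D (k + 1) ↔ u ∈ U :=
    fun u => Iff.rfl
  simp only [hmem]
  have e1 : ((permGL F n (Equiv.swap ⟨k, Nat.lt_of_succ_lt h⟩ ⟨k + 1, h⟩) : GLn F n) :
      Matrix (Fin n) (Fin n) F).mulVec (ee ⟨k, hk⟩) = ee ⟨k + 1, h⟩ := by
    ext i
    rw [permGL_mulVec, Equiv.swap_inv, ee, ee, Pi.single_apply, Pi.single_apply]
    congr 1
    rw [Equiv.swap_apply_eq_iff, Equiv.swap_apply_left]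
  have e2 : ∀ hh t, ((transvGL F n ⟨k + 1, h⟩ ⟨k, Nat.lt_of_succ_lt h⟩ hh t : GLn F n) :
      Matrix (Fin n) (Fin n) F).mulVec (ee ⟨k, hk⟩) = ee ⟨k, hk⟩ + t • ee ⟨k + 1, h⟩ := by
    intro hh t
    ext i
    rw [transv_mulVec]
    simp only [ee, Pi.add_apply, Pi.smul_apply, Pi.single_apply, smul_eq_mul]
    simp
  simp only [e1, e2]
  have hEC : ∀ j, (sp C j).comap (Matrix.mulVecLin (C.out : Matrix (Fin n) (Fin n) F)) = Ef F n j :=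
    fun j => Submodule.comap_map_eq_of_injective (gl_inj _) _
  have hlow : Ef F n k ≤ U := by
    rw [← hEC k, ← h1 k (by omega)]
    exact Submodule.comap_mono (sp_mono D (Nat.le_succ k))
  have hhigh : U ≤ Ef F n (k + 2) := by
    rw [← hEC (k + 2), ← h1 (k + 2) (by omega)]
    exact Submodule.comap_mono (sp_mono D (Nat.le_succ (k + 1)))
  have hfr : Module.finrank F U = k + 1 := by
    have : U.map (Matrix.mulVecLin (C.out : Matrix (Fin n) (Fin n) F)) = sp D (k + 1) := by
      apply Submodule.map_comap_eq_of_surjective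
      intro u
      refine ⟨((C.out⁻¹ : GLn F n) : Matrix (Fin n) (Fin n) F).mulVec u, ?_⟩
      rw [Matrix.mulVecLin_apply, Matrix.mulVec_mulVec]
      simp
    rw [← finrank_map_gl C.out U, this, finrank_sp]
    omega
  have s1 := Ef_succ (F := F) (⟨k, hk⟩ : Fin n)
  have s2 := Ef_succ (F := F) (⟨k + 1, h⟩ : Fin n)
  simp only [add_assoc, Nat.reduceAdd] at s1 s2
  have hDC : D ≠ C ↔ ee ⟨k, hk⟩ ∉ U := by
    rw [not_iff_not]
    constructor
    · rintro rfl
      rw [hU, hEC]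
      exact ee_mem (F := F) (⟨k, hk⟩ : Fin n)
    · intro hm
      apply sp_inj
      intro j
      by_cases hj : j = k + 1
      · subst hj
        symm
        apply Submodule.eq_of_le_of_finrank_le
        · rw [sp, spG, Submodule.map_le_iff_le_comap, s1]
          refine sup_le hlow ?_
          rw [span_singleton_le_iff_mem]
          exact hm
        · rw [finrank_sp, finrank_sp]
      · exact h1 j hj
  simp only [hDC]
  have hnot : ¬ (ee ⟨k, hk⟩ ∈ U ∧ ee ⟨k + 1, h⟩ ∈ U) := by
    rintro ⟨ha, hb⟩
    have : Ef F n (k + 2) ≤ U := by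
      rw [s2, s1]
      refine sup_le (sup_le hlow ?_) ?_
      · rw [span_singleton_le_iff_mem]; exact ha
      · rw [span_singleton_le_iff_mem]; exact hb
    have := Submodule.finrank_mono this
    rw [finrank_Ef, hfr] at this
    omega
  by_cases hb : ee ⟨k + 1, h⟩ ∈ U
  · have ha : ee ⟨k, hk⟩ ∉ U := fun ha => hnot ⟨ha, hb⟩
    rw [if_pos hb, if_pos ha, Finset.card_eq_zero.mpr]
    · simp
    · rw [Finset.filter_eq_empty_iff]
      rintro t _ ⟨_, ht⟩
      apply ha
      have := sub_mem ht (U.smul_mem t hb)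
      simpa using this
  · rw [if_neg hb, zero_add]
    have huniq : ∀ t s : F, ee ⟨k, hk⟩ + t • ee ⟨k + 1, h⟩ ∈ U →
        ee ⟨k, hk⟩ + s • ee ⟨k + 1, h⟩ ∈ U → t = s := by
      intro t s ht hs
      by_contra hts
      apply hb
      have h3 := sub_mem ht hs
      rw [add_sub_add_left_eq_sub, ← sub_smul] at h3
      exact (U.smul_mem_iff (sub_ne_zero.mpr hts)).mp h3
    by_cases ha : ee ⟨k, hk⟩ ∈ U
    · rw [if_neg (not_not.mpr ha), Finset.card_eq_zero.mpr]
      · simp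
      · rw [Finset.filter_eq_empty_iff]
        rintro t _ ⟨ht0, ht⟩
        apply ht0
        exact huniq t 0 ht (by simpa using ha)
    · rw [if_pos ha]
      have hex : ∃ u ∈ U, u ∉ Ef F n k := by
        by_contra hc
        push Not at hc
        have := Submodule.finrank_mono (show U ≤ Ef F n k from hc)
        rw [finrank_Ef, hfr] at this
        omega
      obtain ⟨u, huU, huE⟩ := hex
      have hu2 := hhigh huU
      rw [s2, s1, Submodule.mem_sup] at hu2
      obtain ⟨y, hy, z, hz, rfl⟩ := hu2
      rw [Submodule.mem_sup] at hy
      obtain ⟨y', hy', z', hz', rfl⟩ := hy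
      rw [Submodule.mem_span_singleton] at hz hz'
      obtain ⟨a, rfl⟩ := hz'
      obtain ⟨b, rfl⟩ := hz
      have hab : a • ee ⟨k, hk⟩ + b • ee ⟨k + 1, h⟩ ∈ U := by
        have := sub_mem huU (hlow hy')
        rwa [add_assoc, add_sub_cancel_left] at this
      have ha0 : a ≠ 0 := by
        rintro rfl
        rw [zero_smul, zero_add] at hab
        by_cases hb0 : b = 0
        · subst hb0
          apply huE
          simpa using hy'
        · exact hb ((U.smul_mem_iff hb0).mp hab)
      have ht : ee ⟨k, hk⟩ + (a⁻¹ * b) • ee ⟨k + 1, h⟩ ∈ U := by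
        have := U.smul_mem a⁻¹ hab
        rwa [smul_add, smul_smul, smul_smul, inv_mul_cancel₀ ha0, one_smul] at this
      rw [Finset.card_eq_one.mpr]
      · simp
      · refine ⟨a⁻¹ * b, ?_⟩
        ext t
        simp only [Finset.mem_filter, Finset.mem_univ, true_and, Finset.mem_singleton]
        constructor
        · rintro ⟨_, h3⟩
          exact huniq _ _ h3 ht
        · rintro rfl
          refine ⟨fun h0 => ha ?_, ht⟩
          rw [h0] at ht
          simpa using ht

/-- the relation realised by `T_k ⋯ T_1` -/
def Pk (k : ℕ) (C D : Cosets F n) : Prop :=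
  (∀ j, k < j → sp D j = sp C j) ∧ ∀ j, j ≤ k → sp D (j + 1) = sp D 1 ⊔ sp C j

lemma prodGen_eq (k : ℕ) (h : k < n) (C D : Cosets F n) :
    prodGenGB F n ℝ k C D = if Pk k C D then 1 else 0 := by
  induction k generalizing C D with
  | zero =>
    rw [prodGenGB, Matrix.one_apply]
    congr 1
    rw [eq_iff_iff]
    constructor
    · rintro rfl
      refine ⟨fun _ _ => rfl, fun j hj => ?_⟩
      rw [Nat.le_zero.mp hj, sp_zero, sup_bot_eq]
    · rintro ⟨h1, -⟩
      apply sp_inj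
      intro j
      rcases Nat.eq_zero_or_pos j with rfl | hj
      · rw [sp_zero, sp_zero]
      · exact (h1 j hj).symm
  | succ k ih =>
    rw [prodGenGB, Matrix.mul_apply]
    have ih' : ∀ E, prodGenGB F n ℝ k E D = if Pk k E D then 1 else 0 := 
      fun E => ih (Nat.lt_of_succ_lt h) E D
    simp only [ih', genGB_eq k h C]
    have hforce : ∀ E, ((E ≠ C ∧ ∀ j, j ≠ k + 1 → sp E j = sp C j) ∧ Pk k E D) →
        Pk (k + 1) C D ∧ ∀ j, sp E j = if j ≤ k then sp C j else sp D j := by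
      rintro E ⟨⟨hEC, h1⟩, h2, h3⟩
      have hE : ∀ j, sp E j = if j ≤ k then sp C j else sp D j := by
        intro j
        split_ifs with hj
        · exact h1 j (by omega)
        · exact (h2 j (by omega)).symm
      refine ⟨⟨fun j hj => ?_, fun j hj => ?_⟩, hE⟩
      · rw [h2 j (by omega), h1 j (by omega)]
      · rcases Nat.lt_or_ge k j with hkj | hkj
        · have hjk : j = k + 1 := by omega
          subst hjk
          have e : sp D (k + 2) = sp C (k + 2) := by
            rw [h2 _ (by omega), h1 _ (by omega)]
          have hle : sp D 1 ⊔ sp C (k + 1) ≤ sp D (k + 2) := by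
            refine sup_le (sp_mono D (by omega)) ?_
            rw [e]; exact sp_mono C (by omega)
          symm
          apply Submodule.eq_of_le_of_finrank_le hle
          have hlt : sp C (k + 1) < sp D 1 ⊔ sp C (k + 1) := by
            refine lt_of_le_of_ne le_sup_right fun heq => hEC ?_
            have hd : sp D 1 ≤ sp C (k + 1) := by rw [heq]; exact le_sup_left
            have hDC : sp D (k + 1) = sp C (k + 1) := by
              apply Submodule.eq_of_le_of_finrank_le
              · rw [h3 k le_rfl, h1 k (by omega)]
                exact sup_le hd (sp_mono C (by omega))
              · rw [finrank_sp, finrank_sp]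
            apply sp_inj
            intro j
            by_cases hj : j = k + 1
            · rw [hj, ← h2 _ (by omega), hDC]
            · exact h1 j hj
          have := Submodule.finrank_lt_finrank_of_lt hlt
          rw [finrank_sp] at this ⊢
          omega
        · rw [h3 j hkj, h1 j (by omega)]
    by_cases hP : Pk (k + 1) C D
    · rw [if_pos hP]
      obtain ⟨p1, p2⟩ := hP
      obtain ⟨E, hE⟩ := sp_exists (fun j => if j ≤ k then sp C j else sp D j) (by
        intro j hj
        split_ifs with a b
        · exact sp_mono C (Nat.le_succ j)
        · rw [p2 j (by omega)]; exact le_sup_right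
        · omega
        · exact sp_mono D (Nat.le_succ j)) (by
        intro j hj
        by_cases a : j ≤ k
        · have e : (if j ≤ k then sp C j else sp D j) = sp C j := if_pos a
          refine (congrArg (fun U : Submodule F (Fin n → F) => Module.finrank F U) e).trans ?_
          rw [finrank_sp]; omega
        · have e : (if j ≤ k then sp C j else sp D j) = sp D j := if_neg a
          refine (congrArg (fun U : Submodule F (Fin n → F) => Module.finrank F U) e).trans ?_
          rw [finrank_sp]; omega)
      have hE' : ∀ j, sp E j = if j ≤ k then sp C j else sp D j := by
        intro j
        rcases le_total j n with hj | hj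
        · exact hE j hj
        · rw [sp_top E hj, sp_top C hj, sp_top D hj, ite_self]
      have hEa : ∀ j, j ≤ k → sp E j = sp C j := fun j hj => by rw [hE', if_pos hj]
      have hEb : ∀ j, k < j → sp E j = sp D j := fun j hj => by rw [hE', if_neg (by omega)]
      rw [Finset.sum_eq_single E]
      · rw [if_pos, if_pos, mul_one]
        · refine ⟨fun j hj => (hEb j hj).symm, fun j hj => ?_⟩
          rw [p2 j (by omega), hEa j hj]
        · refine ⟨?_, fun j hj => ?_⟩
          · rintro rfl
            have h3 := p2 (k + 1) le_rfl
            rw [hEb _ (by omega), sup_eq_right.mpr (sp_mono D (by omega))] at h3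
            have h4 := congrArg (fun U : Submodule F (Fin n → F) => Module.finrank F U) h3
            simp only [finrank_sp] at h4
            omega
          · rcases Nat.lt_or_ge k j with hkj | hkj
            · rw [hEb j hkj, p1 j (by omega)]
            · exact hEa j hkj
      · intro E' _ hne
        rw [ite_mul, one_mul, zero_mul, ← ite_and, if_neg]
        intro hc
        apply hne
        apply sp_inj
        intro j
        rw [(hforce E' hc).2 j, hE' j]
      · simp
    · rw [if_neg hP]
      refine Finset.sum_eq_zero fun E _ => ?_
      rw [ite_mul, one_mul, zero_mul, ← ite_and, if_neg]
      exact fun hc => hP (hforce E hc).1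

/-- top nonzero entry -/
def isPiv (v : Fin n → F) (s : Fin n) : Prop := v s ≠ 0 ∧ ∀ i, i < s → v i = 0

lemma isPiv_exists (v : Fin n → F) (hv : v ≠ 0) : ∃ s, isPiv v s := by
  obtain ⟨i, hi⟩ := Function.ne_iff.mp hv
  have hne : (Finset.univ.filter fun i => v i ≠ 0).Nonempty := ⟨i, by simpa using hi⟩
  refine ⟨(Finset.univ.filter fun i => v i ≠ 0).min' hne, ?_, ?_⟩
  · have := Finset.min'_mem _ hne
    simpa using this
  · intro j hj
    by_contra hc
    have := Finset.min'_le (Finset.univ.filter fun i => v i ≠ 0) j (by simpa using hc)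
    exact absurd hj this.not_gt

lemma isPiv_unique {v : Fin n → F} {s t : Fin n} (hs : isPiv v s) (ht : isPiv v t) : s = t := by
  rcases lt_trichotomy s t with h | h | h
  · exact absurd (ht.2 s h) hs.1
  · exact h
  · exact absurd (hs.2 t h) ht.1

/-- weight of a vector -/
def wtv (x : Fin n → ℝ) (v : Fin n → F) : ℝ :=
  ∑ s, if isPiv v s then
    x s / (Fintype.card F : ℝ) ^ (n - 1 - (s : ℕ)) / ((Fintype.card F : ℝ) - 1) else 0

lemma wtv_piv (x : Fin n → ℝ) {v : Fin n → F} {s : Fin n} (hs : isPiv v s) :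
    wtv x v = x s / (Fintype.card F : ℝ) ^ (n - 1 - (s : ℕ)) / ((Fintype.card F : ℝ) - 1) := by
  rw [wtv, Finset.sum_eq_single s]
  · rw [if_pos hs]
  · intro t _ ht
    rw [if_neg fun h => ht (isPiv_unique h hs)]
  · simp

lemma wtv_zero (x : Fin n → ℝ) : wtv x (0 : Fin n → F) = 0 := by
  rw [wtv]
  refine Finset.sum_eq_zero fun s _ => ?_
  rw [if_neg fun h => h.1 rfl]

lemma q_gt_one (F : Type) [Field F] [Fintype F] : (1 : ℝ) < (Fintype.card F : ℝ) := by
  exact_mod_cast Fintype.one_lt_card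

lemma wtv_pos (x : Fin n → ℝ) (hx : ∀ i, 0 < x i) (v : Fin n → F) (hv : v ≠ 0) : 0 < wtv x v := by
  obtain ⟨s, hs⟩ := isPiv_exists v hv
  rw [wtv_piv x hs]
  have := q_gt_one F
  have := hx s
  apply div_pos (div_pos this (by positivity)) (by linarith)

lemma wtv_nonneg (x : Fin n → ℝ) (hx : ∀ i, 0 < x i) (v : Fin n → F) : 0 ≤ wtv x v := by
  by_cases hv : v = 0
  · rw [hv, wtv_zero]
  · exact (wtv_pos x hx v hv).le

/-- the move-to-front action -/
def actF (v : Fin n → F) (C : Cosets F n) : Cosets F n := Classical.choose (act_exists v C)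

lemma actF_spec (v : Fin n → F) (C : Cosets F n) : Set.range (sp (actF v C)) =
    insert ⊥ ((fun U => span F {v} ⊔ U) '' Set.range (sp C)) := Classical.choose_spec (act_exists v C)

/-- the concrete flag data -/
def fdata (F : Type) [Field F] [Fintype F] [DecidableEq F] {n : ℕ} 
    (x : Fin n → ℝ) (hx : ∀ i, 0 < x i) : FlagData F (Fin n → F) (Cosets F n) where
  FS C := Set.range (sp C)
  inj' := sp_inj'
  bot C := ⟨0, sp_zero C⟩
  act := actF
  hact := actF_spec
  C0 := QuotientGroup.mk 1
  wt := wtv x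
  wt_nonneg := wtv_nonneg x hx

lemma act_ind (v : Fin n → F) (hv : v ≠ 0) (C D : Cosets F n) :
    (if actF v C = D then (1 : ℝ) else 0) =
      (if v ∈ sp D 1 then 1 else 0) * ∑ k ∈ Finset.range n, if Pk k C D then (1 : ℝ) else 0 := by
  have hn : 0 < n := by
    rcases Nat.eq_zero_or_pos n with rfl | h
    · exact absurd (Subsingleton.elim _ _) hv
    · exact h
  have hfv : Module.finrank F (span F {v}) = 1 := finrank_span_singleton hv
  have hfree : ∀ U ∈ Set.range (sp D), sp D (Module.finrank F U) = U := by
    rintro _ ⟨j, rfl⟩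
    symm
    apply sp_eq_of_finrank
    rw [finrank_sp]
    omega
  have hiff : actF v C = D ↔ Set.range (sp D) =
      insert ⊥ ((fun U => span F {v} ⊔ U) '' Set.range (sp C)) := by
    constructor
    · rintro rfl; exact actF_spec v C
    · intro h
      apply sp_inj'
      rw [h, actF_spec]
  have hin : actF v C = D → ∀ j, span F {v} ⊔ sp C j ∈ Set.range (sp D) := by
    intro h j
    rw [hiff.mp h]
    right
    exact ⟨_, ⟨j, rfl⟩, rfl⟩
  by_cases hvD : v ∈ sp D 1
  swap
  · rw [if_neg hvD, zero_mul, if_neg]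
    intro h
    have h1 := hin h 0
    rw [sp_zero, sup_bot_eq] at h1
    have h2 := hfree _ h1
    rw [hfv] at h2
    apply hvD
    rw [h2]
    exact mem_span_singleton_self v
  rw [if_pos hvD, one_mul]
  have hD1 : sp D 1 = span F {v} := by
    symm
    apply Submodule.eq_of_le_of_finrank_le
    · rw [span_singleton_le_iff_mem]; exact hvD
    · rw [finrank_sp, hfv]; omega
  have hex : ∃ j, v ∈ sp C j := ⟨n, by rw [sp_top C le_rfl]; trivial⟩
  obtain ⟨k, hk⟩ : ∃ k, Nat.find hex = k + 1 := by
    apply Nat.exists_eq_succ_of_ne_zero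
    intro h0
    have := Nat.find_spec hex
    rw [h0, sp_zero] at this
    exact hv this
  have hmem : ∀ j, v ∈ sp C j ↔ k + 1 ≤ j := by
    intro j
    rw [← hk]
    constructor
    · exact fun h => Nat.find_min' hex h
    · exact fun h => sp_mono C h (Nat.find_spec hex)
  have hkn : k < n := by
    have : v ∈ sp C n := by rw [sp_top C le_rfl]; trivial
    exact (hmem n).mp this
  have hsup : ∀ j, k < j → span F {v} ⊔ sp C j = sp C j := by
    intro j hj
    rw [sup_eq_right, span_singleton_le_iff_mem]
    exact (hmem j).mpr hj
  rw [Finset.sum_eq_single k]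
  · congr 1
    rw [eq_iff_iff]
    constructor
    · intro h
      refine ⟨fun j hj => ?_, fun j hj => ?_⟩
      · have h1 := hfree _ (hin h j)
        rw [hsup j hj, finrank_sp] at h1
        rw [← h1]
        apply sp_eq_of_finrank
        rw [finrank_sp]
        omega
      · have h1 := hfree _ (hin h j)
        have hlt : sp C j < span F {v} ⊔ sp C j := by
          refine lt_of_le_of_ne le_sup_right fun h' => ?_
          have : v ∈ sp C j := by
            rw [h']; exact mem_sup_left (mem_span_singleton_self _)
          have := (hmem j).mp this
          omega
        have h2 := Submodule.finrank_lt_finrank_of_lt hlt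
        have h3 := Submodule.finrank_add_le_finrank_add_finrank (span F {v}) (sp C j)
        rw [hfv, finrank_sp] at h3
        rw [finrank_sp] at h2
        rw [hD1, ← h1]
        apply sp_eq_of_finrank
        rw [finrank_sp]
        omega
    · rintro ⟨p1, p2⟩
      rw [hiff]
      rw [hD1] at p2
      apply Set.Subset.antisymm
      · rintro _ ⟨j, rfl⟩
        rcases Nat.eq_zero_or_pos j with rfl | hj
        · left; exact sp_zero D
        · right
          rcases Nat.lt_or_ge k j with hkj | hkj
          · exact ⟨_, ⟨j, rfl⟩, by rw [p1 j hkj]; exact hsup j hkj⟩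
          · refine ⟨_, ⟨j - 1, rfl⟩, ?_⟩
            simp only
            rw [← p2 (j - 1) (by omega), Nat.sub_add_cancel hj]
      · apply Set.insert_subset
        · exact ⟨0, sp_zero D⟩
        · rintro _ ⟨_, ⟨j, rfl⟩, rfl⟩
          rcases Nat.lt_or_ge k j with hkj | hkj
          · exact ⟨j, by simp only; rw [p1 j hkj, hsup j hkj]⟩
          · exact ⟨j + 1, p2 j hkj⟩
  · intro j hj hjk
    rw [if_neg]
    rintro ⟨p1, p2⟩
    have a1 : v ∈ sp C (j + 1) := by
      rw [← p1 _ (Nat.lt_succ_self j)]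
      exact sp_mono D (by omega) hvD
    have a2 : v ∉ sp C j := by
      intro hc
      have h1 := p2 j le_rfl
      rw [hD1, sup_eq_right.mpr (by rw [span_singleton_le_iff_mem]; exact hc)] at h1
      have h4 := congrArg (fun U : Submodule F (Fin n → F) => Module.finrank F U) h1
      simp only [finrank_sp] at h4
      rw [Finset.mem_range] at hj
      omega
    rw [hmem] at a1 a2
    omega
  · intro h
    exact absurd (Finset.mem_range.mpr hkn) h

lemma XGB_diag (hn : 0 < n) (x : Fin n → ℝ) (D : Cosets F n) :
    XGB F n ℝ x D D = ∑ v, if v ∈ sp D 1 then wtv x v else 0 := by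
  set c : Fin n → F := (D.out : Matrix (Fin n) (Fin n) F).mulVec (ee ⟨0, hn⟩) with hc
  have hc0 : c ≠ 0 := by
    intro h
    have h1 := gl_inj D.out (a₁ := ee ⟨0, hn⟩) (a₂ := 0) (by
      rw [map_zero]; exact h)
    apply ee_not_mem (F := F) (⟨0, hn⟩ : Fin n)
    rw [h1]
    exact zero_mem _
  have hcol : ∀ i, c i = (D.out : Matrix (Fin n) (Fin n) F) i ⟨0, hn⟩ := by
    intro i
    rw [hc, ee]
    simp
  have hsp : sp D 1 = span F {c} := by
    have e := Ef_succ (F := F) (⟨0, hn⟩ : Fin n)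
    simp only [zero_add] at e
    rw [sp, spG, e, Ef_zero, bot_sup_eq, Submodule.map_span, Set.image_singleton]
    rfl
  obtain ⟨s, hs⟩ := isPiv_exists c hc0
  have hpr : pivotRow F n D = s := by
    apply IsLeast.csInf_eq
    constructor
    · refine ⟨s.2, ?_⟩
      rw [← hcol]
      exact hs.1
    · rintro i ⟨hi, hne⟩
      by_contra hlt
      apply hne
      rw [← hcol]
      exact hs.2 ⟨i, hi⟩ (by rw [Fin.lt_def]; simpa using hlt)
  have hX : XGB F n ℝ x D D = x s / (Fintype.card F : ℝ) ^ (n - 1 - (s : ℕ)) := by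
    rw [XGB, if_pos rfl, dif_pos (by rw [hpr]; exact s.2)]
    simp only [hpr]
  have hset : (Finset.univ.filter fun v => v ∈ sp D 1) =
      Finset.univ.image (fun a : F => a • c) := by
    ext v
    simp only [Finset.mem_filter, Finset.mem_univ, true_and, Finset.mem_image, hsp,
      Submodule.mem_span_singleton]
  rw [hX, ← Finset.sum_filter, hset, Finset.sum_image]
  · have hval : ∀ a : F, wtv x (a • c) = if a ≠ 0 then wtv x c else 0 := by
      intro a
      split_ifs with ha
      · rw [wtv_piv x hs, wtv_piv x (s := s)]
        refine ⟨?_, fun i hi => ?_⟩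
        · simp only [Pi.smul_apply, smul_eq_mul]
          exact mul_ne_zero ha hs.1
        · simp [hs.2 i hi]
      · rw [not_not] at ha
        rw [ha, zero_smul, wtv_zero]
    have hq := q_gt_one F
    have hcard : ((Finset.univ.filter fun a : F => a ≠ 0).card : ℝ) = (Fintype.card F : ℝ) - 1 := by
      rw [Finset.filter_ne' Finset.univ (0 : F), Finset.card_erase_of_mem (Finset.mem_univ _), Finset.card_univ,
        Nat.cast_sub Fintype.card_pos, Nat.cast_one]
    rw [Finset.sum_congr rfl fun a _ => hval a, ← Finset.sum_filter, Finset.sum_const, nsmul_eq_mul,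
      hcard, wtv_piv x hs, mul_div_cancel₀]
    linarith
  · intro a _ b _ hab
    exact smul_left_injective F hc0 hab

lemma TGB_eq (hn : 0 < n) (x : Fin n → ℝ) (C D : Cosets F n) :
    TGB F n ℝ x C D = ∑ v, wtv x v * if actF v C = D then 1 else 0 := by
  have h1 : ∀ v : Fin n → F, wtv x v * (if actF v C = D then (1 : ℝ) else 0) =
      (if v ∈ sp D 1 then wtv x v else 0) *
        ∑ k ∈ Finset.range n, if Pk k C D then (1 : ℝ) else 0 := by
    intro v
    by_cases hv : v = 0
    · rw [hv, wtv_zero]; simp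
    · rw [act_ind v hv]
      split_ifs <;> simp
  rw [Finset.sum_congr rfl fun v _ => h1 v, ← Finset.sum_mul, ← XGB_diag hn, TGB,
    Matrix.mul_apply, Finset.sum_eq_single D]
  · rw [mul_comm, Matrix.sum_apply]
    congr 1
    refine Finset.sum_congr rfl fun k hk => ?_
    rw [prodGen_eq k (Finset.mem_range.mp hk)]
  · intro E _ hE
    rw [XGB, if_neg hE.symm, mul_zero]
  · simp

/-- number of vectors in a coordinate subspace with given pivot -/
lemma card_piv (π : Equiv.Perm (Fin n)) (k : ℕ) (j : Fin n) :
    (((Finset.univ.filter fun v : Fin n → F =>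
      (∀ i : Fin n, k ≤ (i : ℕ) → v (π i) = 0) ∧ isPiv v (π j)).card : ℕ) : ℝ) =
    if (j : ℕ) < k then ((Fintype.card F : ℝ) - 1) * (Fintype.card F : ℝ) ^
      (Finset.univ.filter fun i : Fin n => (i : ℕ) < k ∧ π j < π i).card else 0 := by
  split_ifs with hj
  · have hset : (Finset.univ.filter fun v : Fin n → F =>
        (∀ i : Fin n, k ≤ (i : ℕ) → v (π i) = 0) ∧ isPiv v (π j)) =
        Fintype.piFinset (fun a : Fin n => if a = π j then Finset.univ.erase (0 : F) else
          if ((π⁻¹ a : Fin n) : ℕ) < k ∧ π j < a then Finset.univ else {0}) := by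
      ext v
      simp only [Finset.mem_filter, Finset.mem_univ, true_and, Fintype.mem_piFinset]
      constructor
      · rintro ⟨h1, h2, h3⟩ a
        split_ifs with ha hb
        · subst ha
          simpa using h2
        · simp
        · rw [Finset.mem_singleton]
          rw [not_and_or] at hb
          rcases hb with hb | hb
          · have := h1 (π⁻¹ a) (by omega)
            simpa using this
          · exact h3 a (lt_of_le_of_ne (not_lt.mp hb) ha)
      · intro h
        refine ⟨fun i hi => ?_, ?_, fun a ha => ?_⟩
        · have := h (π i)
          rw [if_neg, if_neg, Finset.mem_singleton] at this
          · exact this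
          · rintro ⟨hc, _⟩
            simp at hc
            omega
          · intro hc
            have := π.injective hc
            subst this
            omega
        · have := h (π j)
          rw [if_pos rfl] at this
          simpa using this
        · have := h a
          rw [if_neg ha.ne, if_neg, Finset.mem_singleton] at this
          · exact this
          · rintro ⟨_, hc⟩
            exact absurd ha hc.not_gt
    rw [hset, Fintype.card_piFinset, Nat.cast_prod, ← Equiv.prod_comp π]
    have hterm : ∀ i : Fin n, (((if π i = π j then Finset.univ.erase (0 : F) else
          if ((π⁻¹ (π i) : Fin n) : ℕ) < k ∧ π j < π i then Finset.univ else {0}).card : ℕ) : ℝ) =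
        (if i = j then ((Fintype.card F : ℝ) - 1) else 1) *
        (if (i : ℕ) < k ∧ π j < π i then (Fintype.card F : ℝ) else 1) := by
      intro i
      by_cases hi : i = j
      · subst hi
        rw [if_pos rfl, if_pos rfl, if_neg (by simp), Finset.card_erase_of_mem (Finset.mem_univ _),
          Finset.card_univ, Nat.cast_sub Fintype.card_pos, Nat.cast_one, mul_one]
      · rw [if_neg fun h => hi (π.injective h), if_neg hi, one_mul, show π⁻¹ (π i) = i from π.symm_apply_apply i]
        split_ifs
        · rw [Finset.card_univ]
        · simp
    rw [Finset.prod_congr rfl fun i _ => hterm i, Finset.prod_mul_distrib, Finset.prod_ite_eq',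
      if_pos (Finset.mem_univ _), Finset.prod_ite, Finset.prod_const, Finset.prod_const_one, mul_one]
  · rw [Nat.cast_eq_zero, Finset.card_eq_zero, Finset.filter_eq_empty_iff]
    rintro v _ ⟨h1, h2, _⟩
    exact h2 (h1 j (by omega))

/-- summand of the denominator -/
def tt (q : ℝ) (x : Fin n → ℝ) (π : Equiv.Perm (Fin n)) (k : ℕ) (j : Fin n) : ℝ :=
  x (π j) / q ^ ((n : ℤ) - ((π j : ℕ) + 1) -
    ((Finset.univ.filter fun i : Fin n => (i : ℕ) < k ∧ π j < π i).card : ℕ))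

lemma mem_sp_perm (π : Equiv.Perm (Fin n)) (k : ℕ) (v : Fin n → F) :
    v ∈ sp (QuotientGroup.mk (permGL F n π) : Cosets F n) k ↔ ∀ i : Fin n, k ≤ (i : ℕ) → v (π i) = 0 := by
  rw [sp_mk, spG]
  constructor
  · rintro ⟨u, hu, rfl⟩ i hi
    rw [Matrix.mulVecLin_apply, permGL_mulVec, show π⁻¹ (π i) = i from π.symm_apply_apply i]
    exact hu i hi
  · intro h
    refine ⟨fun i => v (π i), fun i hi => h i hi, ?_⟩
    ext i
    rw [Matrix.mulVecLin_apply, permGL_mulVec, show π (π⁻¹ i) = i from π.apply_symm_apply i]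

lemma W_perm (x : Fin n → ℝ) (hx : ∀ i, 0 < x i) (π : Equiv.Perm (Fin n)) (k : ℕ) :
    (fdata F x hx).W (sp (QuotientGroup.mk (permGL F n π) : Cosets F n) k) =
      ∑ j : Fin n, if (j : ℕ) < k then tt (Fintype.card F : ℝ) x π k j else 0 := by
  have hq := q_gt_one F
  rw [FlagData.W]
  simp only [mem_sp_perm]
  change (∑ v : Fin n → F, if (∀ i : Fin n, k ≤ (i : ℕ) → v (π i) = 0) then wtv x v else 0) = _
  have h1 : ∀ v : Fin n → F, (if ∀ i : Fin n, k ≤ (i : ℕ) → v (π i) = 0 then wtv x v else 0) =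
      ∑ j, if ((∀ i : Fin n, k ≤ (i : ℕ) → v (π i) = 0) ∧ isPiv v (π j)) then
        x (π j) / (Fintype.card F : ℝ) ^ (n - 1 - (π j : ℕ)) / ((Fintype.card F : ℝ) - 1) else 0 := by
    intro v
    by_cases hv : ∀ i : Fin n, k ≤ (i : ℕ) → v (π i) = 0
    · rw [if_pos hv, wtv, ← Equiv.sum_comp π]
      refine Finset.sum_congr rfl fun j _ => ?_
      by_cases hp : isPiv v (π j)
      · rw [if_pos hp, if_pos ⟨hv, hp⟩]
      · rw [if_neg hp, if_neg fun h => hp h.2]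
    · rw [if_neg hv, Finset.sum_eq_zero]
      intro j _
      rw [if_neg fun h => hv h.1]
  rw [Finset.sum_congr rfl fun v _ => h1 v, Finset.sum_comm]
  refine Finset.sum_congr rfl fun j _ => ?_
  rw [← Finset.sum_filter, Finset.sum_const, nsmul_eq_mul, card_piv]
  split_ifs with hj
  · have hq0 : (Fintype.card F : ℝ) ≠ 0 := by linarith
    have hq1 : (Fintype.card F : ℝ) - 1 ≠ 0 := by linarith
    rw [tt, zpow_sub₀ hq0]
    have e : (n : ℤ) - ((π j : ℕ) + 1) = ((n - 1 - (π j : ℕ) : ℕ) : ℤ) := by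
      have := (π j).2
      omega
    rw [e, zpow_natCast, zpow_natCast]
    field_simp
  · rw [zero_mul]

lemma sum_wtv (x : Fin n → ℝ) (hx : ∀ i, 0 < x i) (hx1 : ∑ i, x i = 1) :
    ∑ v : Fin n → F, wtv x v = 1 := by
  have h := W_perm (F := F) x hx 1 n
  rw [sp_top _ le_rfl, FlagData.W] at h
  simp only [Submodule.mem_top, if_true] at h
  change ∑ v : Fin n → F, wtv x v = _ at h
  rw [h, ← hx1]
  refine Finset.sum_congr rfl fun j _ => ?_
  rw [if_pos j.2, tt]
  have e : (Finset.univ.filter fun i : Fin n => (i : ℕ) < n ∧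
      (1 : Equiv.Perm (Fin n)) j < (1 : Equiv.Perm (Fin n)) i) = Finset.Ioi j := by
    ext i
    simp
  rw [e, Fin.card_Ioi, Equiv.Perm.one_apply]
  have : (n : ℤ) - ((j : ℕ) + 1) - ((n - 1 - (j : ℕ) : ℕ) : ℤ) = 0 := by
    have := j.2
    omega
  rw [this, zpow_zero, div_one]

lemma W_lt (x : Fin n → ℝ) (hx : ∀ i, 0 < x i) (hx1 : ∑ i, x i = 1)
    (U : Submodule F (Fin n → F)) (hU : U ≠ ⊤) : (fdata F x hx).W U < 1 := by
  rw [← sum_wtv (F := F) x hx hx1, FlagData.W]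
  obtain ⟨v, hv⟩ : ∃ v, v ∉ U := by
    by_contra hc
    push Not at hc
    exact hU (eq_top_iff.mpr fun v _ => hc v)
  apply Finset.sum_lt_sum
  · intro u _
    split_ifs
    · exact le_rfl
    · exact wtv_nonneg x hx u
  · refine ⟨v, Finset.mem_univ _, ?_⟩
    rw [if_neg hv]
    apply wtv_pos x hx
    rintro rfl
    exact hv (zero_mem _)

lemma cnt_succ (π : Equiv.Perm (Fin n)) (k j : Fin n) :
    (Finset.univ.filter fun i : Fin n => (i : ℕ) < (k : ℕ) + 1 ∧ π j < π i).card =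
    (Finset.univ.filter fun i : Fin n => (i : ℕ) < (k : ℕ) ∧ π j < π i).card +
      if π j < π k then 1 else 0 := by
  split_ifs with h
  · rw [← Finset.card_insert_of_notMem (a := k) (by simp)]
    congr 1
    ext i
    simp only [Finset.mem_filter, Finset.mem_univ, true_and, Finset.mem_insert]
    constructor
    · rintro ⟨h1, h2⟩
      by_cases hik : i = k
      · left; exact hik
      · right
        refine ⟨?_, h2⟩
        have : (i : ℕ) ≠ k := fun h => hik (Fin.ext h)
        omega
    · rintro (rfl | ⟨h1, h2⟩)
      · exact ⟨by omega, h⟩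
      · exact ⟨by omega, h2⟩
  · rw [add_zero]
    congr 1
    ext i
    simp only [Finset.mem_filter, Finset.mem_univ, true_and]
    constructor
    · rintro ⟨h1, h2⟩
      refine ⟨?_, h2⟩
      have : (i : ℕ) ≠ k := by
        intro hc
        rw [Fin.ext hc] at h2
        exact h h2
      omega
    · rintro ⟨h1, h2⟩
      exact ⟨by omega, h2⟩

lemma tt_eq (q : ℝ) (x : Fin n → ℝ) (π : Equiv.Perm (Fin n)) (k j : Fin n) :
    tt q x π k j = x (π j) / q ^ ((n : ℤ) - ((π j : ℕ) + 1) - bCount π k (π j)) := by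
  rfl

lemma tt_succ (q : ℝ) (hq : q ≠ 0) (x : Fin n → ℝ) (π : Equiv.Perm (Fin n)) (k j : Fin n) :
    tt q x π ((k : ℕ) + 1) j = tt q x π k j * if π j < π k then q else 1 := by
  rw [tt, tt, cnt_succ]
  split_ifs with h
  · push_cast
    rw [← sub_sub, zpow_sub_one₀ hq]
    field_simp
  · simp

lemma fGB_eq (q : ℝ) (hq : q ≠ 0) (x : Fin n → ℝ) (π : Equiv.Perm (Fin n)) (k : Fin n) :
    (∑ j : Fin n, if (j : ℕ) < (k : ℕ) + 1 then tt q x π ((k : ℕ) + 1) j else 0) -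
      (∑ j : Fin n, if (j : ℕ) < (k : ℕ) then tt q x π k j else 0) = fGB n q x π k := by
  rw [fGB, Finset.sum_filter, ← Finset.sum_sub_distrib]
  refine Finset.sum_congr rfl fun j _ => ?_
  rw [← tt_eq, tt_succ q hq]
  rcases lt_trichotomy j k with h | h | h
  · have h' : (j : ℕ) < k := h
    rw [if_pos (by omega : (j : ℕ) < (k : ℕ) + 1), if_pos h']
    have hne : π j ≠ π k := fun hc => h.ne (π.injective hc)
    by_cases hp : π j < π k
    · rw [if_pos hp, if_pos ⟨h.le, hp.le⟩, if_pos hp]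
      ring
    · rw [if_neg hp, if_neg fun hc => hp (lt_of_le_of_ne hc.2 hne)]
      ring
  · subst h
    simp
  · have h' : (k : ℕ) < j := h
    rw [if_neg (by omega), if_neg (by omega), if_neg fun hc => absurd hc.1 h.not_ge]
    simp

lemma Psi_prod (x : Fin n → ℝ) (hx : ∀ i, 0 < x i) (hx1 : ∑ i, x i = 1) (D : Cosets F n) :
    (fdata F x hx).Psi D = ∏ k ∈ Finset.range n,
      ((fdata F x hx).W (sp D (k + 1)) - (fdata F x hx).W (sp D k)) /
        (1 - (fdata F x hx).W (sp D k)) :=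
  FlagData.Psi_formula _ (sum_wtv x hx hx1) (W_lt x hx hx1) D n (sp D) rfl (finrank_sp D)
    (Module.finrank_fin_fun F) (sp_mono D)

lemma Psi_perm (x : Fin n → ℝ) (hx : ∀ i, 0 < x i) (hx1 : ∑ i, x i = 1)
    (π : Equiv.Perm (Fin n)) :
    (fdata F x hx).Psi (QuotientGroup.mk (permGL F n π)) = psiGB n (Fintype.card F : ℝ) x π := by
  have hq := q_gt_one F
  rw [Psi_prod x hx hx1, psiGB, Finset.prod_range]
  refine Finset.prod_congr rfl fun k _ => ?_
  rw [W_perm, W_perm, fGB_eq _ (by linarith), Finset.sum_filter]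
  rfl

lemma isPiv_lower (l : GLn F n) (hl : lowerTri (l : Matrix (Fin n) (Fin n) F))
    (v : Fin n → F) (s : Fin n) (hs : isPiv v s) :
    isPiv ((l : Matrix (Fin n) (Fin n) F).mulVec v) s := by
  have hdiag : (l : Matrix (Fin n) (Fin n) F) s s ≠ 0 := by
    have hdet : IsUnit ((l : Matrix (Fin n) (Fin n) F).det) :=
      (Matrix.isUnit_iff_isUnit_det _).mp l.isUnit
    rw [Matrix.det_of_isLowerTriangular _ (fun i j hij => hl i j hij)] at hdet
    exact (Finset.prod_ne_zero_iff.mp hdet.ne_zero) s (Finset.mem_univ _)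
  constructor
  · simp only [Matrix.mulVec, dotProduct]
    rw [Finset.sum_eq_single s]
    · exact mul_ne_zero hdiag hs.1
    · intro j _ hj
      rcases lt_or_gt_of_ne hj with h | h
      · rw [hs.2 j h, mul_zero]
      · rw [hl s j h, zero_mul]
    · simp
  · intro i hi
    simp only [Matrix.mulVec, dotProduct]
    refine Finset.sum_eq_zero fun j _ => ?_
    rcases le_or_gt j i with h | h
    · rw [hs.2 j (lt_of_le_of_lt h hi), mul_zero]
    · rw [hl i j h, zero_mul]

lemma wtv_lower (x : Fin n → ℝ) (l : GLn F n) (hl : lowerTri (l : Matrix (Fin n) (Fin n) F))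
    (v : Fin n → F) : wtv x ((l : Matrix (Fin n) (Fin n) F).mulVec v) = wtv x v := by
  by_cases hv : v = 0
  · rw [hv, Matrix.mulVec_zero]
  · obtain ⟨s, hs⟩ := isPiv_exists v hv
    rw [wtv_piv x hs, wtv_piv x (isPiv_lower l hl v s hs)]

lemma W_lower (x : Fin n → ℝ) (hx : ∀ i, 0 < x i) (l : GLn F n)
    (hl : lowerTri (l : Matrix (Fin n) (Fin n) F)) (U : Submodule F (Fin n → F)) :
    (fdata F x hx).W (U.map (Matrix.mulVecLin (l : Matrix (Fin n) (Fin n) F))) =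
      (fdata F x hx).W U := by
  have hbij : Function.Bijective (Matrix.mulVecLin (l : Matrix (Fin n) (Fin n) F)) :=
    Finite.injective_iff_bijective.mp (gl_inj l)
  rw [FlagData.W, FlagData.W, ← hbij.sum_comp]
  refine Finset.sum_congr rfl fun v _ => ?_
  have : Matrix.mulVecLin (l : Matrix (Fin n) (Fin n) F) v ∈
      U.map (Matrix.mulVecLin (l : Matrix (Fin n) (Fin n) F)) ↔ v ∈ U := by
    constructor
    · rintro ⟨u, hu, h⟩
      rwa [← gl_inj l h]
    · exact fun h => ⟨v, h, rfl⟩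
  simp only [this]
  congr 1
  exact wtv_lower x l hl v

lemma Psi_dc (x : Fin n → ℝ) (hx : ∀ i, 0 < x i) (hx1 : ∑ i, x i = 1)
    (π : Equiv.Perm (Fin n)) (C : Cosets F n) (hC : inDC F n π C) :
    (fdata F x hx).Psi C = (fdata F x hx).Psi (QuotientGroup.mk (permGL F n π)) := by
  obtain ⟨l, b, hl, hb, rfl⟩ := hC
  have hW : ∀ k, (fdata F x hx).W (sp (QuotientGroup.mk (l * permGL F n π * b) : Cosets F n) k) =
      (fdata F x hx).W (sp (QuotientGroup.mk (permGL F n π) : Cosets F n) k) := by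
    intro k
    rw [sp_mk, spG_mul_upper _ b hb, spG_mul, W_lower x hx l hl, sp_mk]
  rw [Psi_prod x hx hx1, Psi_prod x hx hx1]
  simp only [hW]

lemma op_eq (hn : 0 < n) (x : Fin n → ℝ) (hx : ∀ i, 0 < x i) (f : Cosets F n → ℝ)
    (C : Cosets F n) :
    (fdata F x hx).op f C = ∑ D, TGB F n ℝ x C D * f D := by
  simp only [TGB_eq hn, Finset.sum_mul]
  rw [Finset.sum_comm]
  change ∑ v, wtv x v * f (actF v C) = _
  refine Finset.sum_congr rfl fun v _ => ?_
  rw [Finset.sum_eq_single (actF v C)]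
  · rw [if_pos rfl, mul_one]
  · intro D _ hD
    rw [if_neg hD.symm, mul_zero, zero_mul]
  · simp

lemma stat_unique (hn : 0 < n) (x : Fin n → ℝ) (hx : ∀ i, 0 < x i) (hx1 : ∑ i, x i = 1)
    (Ψ : Cosets F n → ℝ) (h : IsStationary (TGB F n ℝ x) (∑ i, x i) Ψ) :
    Ψ = (fdata F x hx).Psi := by
  obtain ⟨_, h1, h2⟩ := h
  rw [hx1, one_smul] at h2
  funext D
  rw [FlagData.Psi, ← FlagData.h_unique (fdata F x hx) (sum_wtv x hx hx1) (W_lt x hx hx1) Ψ h1]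
  · simp
  · intro f
    simp only [op_eq hn, Finset.mul_sum]
    rw [Finset.sum_comm]
    refine Finset.sum_congr rfl fun D _ => ?_
    have h3 := congrFun h2 D
    rw [Matrix.vecMul, dotProduct] at h3
    conv_rhs => rw [← h3]
    rw [Finset.sum_mul]
    exact Finset.sum_congr rfl fun C _ => by ring

lemma stat_exists (hn : 0 < n) (x : Fin n → ℝ) (hx : ∀ i, 0 < x i) (hx1 : ∑ i, x i = 1) :
    IsStationary (TGB F n ℝ x) (∑ i, x i) (fdata F x hx).Psi := by
  refine ⟨fun D => ?_, ?_, ?_⟩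
  · apply FlagData.h_nonneg _ (W_lt x hx hx1)
    intro C
    split_ifs <;> norm_num
  · have := FlagData.sum_Psi (fdata F x hx) (fun _ => 1)
    rw [FlagData.h_one _ (sum_wtv x hx hx1) (W_lt x hx hx1)] at this
    simpa using this
  · rw [hx1, one_smul]
    funext D
    rw [Matrix.vecMul, dotProduct]
    conv_rhs => rw [FlagData.Psi, ← FlagData.h_op_nil _ (sum_wtv x hx hx1) (W_lt x hx hx1),
      ← FlagData.sum_Psi]
    refine Finset.sum_congr rfl fun C _ => ?_
    rw [op_eq hn]
    simp

end Concrete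

/-- Let `q` be a prime power (here: the cardinality of the finite field
`F`) and `x` positive weights summing to `1`.  Then `T_{G/B}(q,x)` has a unique stationary
distribution `Ψ`; `Ψ` is constant on double cosets `[π]`; at the coset `F_π` of the
permutation matrix of `π` it is given by the product formula `psiGB`; and its entries sum
to `1`. -/
theorem qTsetlin_flags_stationary (F : Type) [Field F] [Fintype F] [DecidableEq F]
    (n : ℕ) (x : Fin n → ℝ) (hx : ∀ i, 0 < x i) (hx1 : ∑ i, x i = 1) :
    (∃! Ψ : Cosets F n → ℝ, IsStationary (TGB F n ℝ x) (∑ i, x i) Ψ) ∧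
    (∀ Ψ : Cosets F n → ℝ, IsStationary (TGB F n ℝ x) (∑ i, x i) Ψ →
      (∀ (π : Equiv.Perm (Fin n)) (C C' : Cosets F n),
        inDC F n π C → inDC F n π C' → Ψ C = Ψ C') ∧
      (∀ π : Equiv.Perm (Fin n),
        Ψ (QuotientGroup.mk (permGL F n π)) = psiGB n (Fintype.card F : ℝ) x π) ∧
      (∑ C : Cosets F n, Ψ C = 1)) := by
  have hn : 0 < n := by
    rcases Nat.eq_zero_or_pos n with rfl | h
    · simp at hx1
    · exact h
  refine ⟨⟨(fdata F x hx).Psi, stat_exists hn x hx hx1, fun Ψ h => stat_unique hn x hx hx1 Ψ h⟩, ?_⟩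
  intro Ψ h
  have e := stat_unique hn x hx hx1 Ψ h
  refine ⟨fun π C C' hC hC' => ?_, fun π => ?_, h.2.1⟩
  · rw [e, Psi_dc x hx hx1 π C hC, Psi_dc x hx hx1 π C' hC']
  · rw [e, Psi_perm x hx hx1]

end QTsetlin
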